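/- arXiv:1211.4818 — 3 statements merged into one kernel-verified Lean document; each statement's English description precedes it below -/
import Mathlib

section
/- Assume condition (D1) (A is increasing on [0,1]) and let F₀ and G₀ be cumulative distribution functions of probability measures on ℝ with finite first moments. Let F and G be the unique weak solutions in 𝓕 of the Cauchy problem with respective initial conditions F₀ and G₀. Let p ≥ 1. If W_p(F₀,G₀) = +∞, then W_p(F_t,G_t) = +∞ for all t ≥ 0. -/
open MeasureTheory Set Filter Topology Function
open scoped ENNReal

noncomputable section

/-- `primitive f u = ∫₀^u f(v) dv`. -/
def primitive (f : ℝ → ℝ) : ℝ → ℝ := fun u => ∫ v in (0:ℝ)..u, f v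

/-- The cumulative distribution function `H * μ` of a measure `μ` on `ℝ`. -/
def cdfOf (μ : MeasureTheory.Measure ℝ) : ℝ → ℝ := fun x => (μ (Set.Iic x)).toReal

/-- Pseudo-inverse of a cdf: `F⁻¹(u) = inf {x | F x > u}`. -/
def pinv (F : ℝ → ℝ) (u : ℝ) : ℝ := sInf {x : ℝ | u < F x}

/-- Wasserstein distance of order `p` between two cdfs, as an element of `[0,∞]`:
`W_p(F,G) = (∫₀¹ |F⁻¹(u) - G⁻¹(u)|^p du)^(1/p)`. -/
def Wdist (p : ℝ) (F G : ℝ → ℝ) : ℝ≥0∞ :=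
  (∫⁻ u in Set.Ioo (0:ℝ) 1, ENNReal.ofReal (|pinv F u - pinv G u| ^ p)) ^ (1/p)

/-- `F` is a weak solution of `∂ₜ F = (1/2) ∂ₓₓ (A (F)) - ∂ₓ (B (F))` with
initial condition `F₀`. -/
def IsWeakSolution (A B : ℝ → ℝ) (F₀ : ℝ → ℝ) (F : ℝ → ℝ → ℝ) : Prop :=
  ∀ g : ℝ → ℝ → ℝ, ContDiff ℝ (⊤ : ℕ∞) (Function.uncurry g) →
    HasCompactSupport (Function.uncurry g) →
    ∀ t : ℝ, 0 ≤ t →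
      ((∫ x : ℝ, g t x * F t x) - ∫ x : ℝ, g 0 x * F₀ x) =
        ∫ x : ℝ, ∫ s in (0:ℝ)..t,
          ((1/2) * A (F s x) * deriv (deriv (fun y => g s y)) x
            + B (F s x) * deriv (fun y => g s y) x
            + F s x * deriv (fun r => g r x) s)

/-- Membership in the class `𝓕`. -/
def MemF (F : ℝ → ℝ → ℝ) : Prop :=
  ∃ P : ℝ → ProbabilityMeasure ℝ,
    ContinuousOn P (Set.Ici 0) ∧
    (∀ t : ℝ, 0 ≤ t → Integrable (fun x => |x|) (P t : Measure ℝ)) ∧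
    (∀ T : ℝ, 0 < T → IntegrableOn (fun t => ∫ x, |x| ∂(P t : Measure ℝ)) (Set.Icc 0 T)) ∧
    (∀ t : ℝ, 0 ≤ t → ∀ x : ℝ, F t x = ((P t : Measure ℝ) (Set.Iic x)).toReal)

/-! Let `σ = ±1`. Test the equation against a profile `k` travelling with velocity `σ K` and
integrate by parts in `x`: up to the factor `-σ`, the derivative in time of
`∫ k(x - σ K t) F t x dx` is minus a sum of integrals of `k - σ k'` and `k` against the measures
`½ dA(F t)` and `d(K F t - ½ A(F t) - σ B(F t))`, which are positive for large `K` because `A` and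
`B` are Lipschitz. Smoothed one-sided exponential profiles are nonnegative and satisfy `σ k' ≤ k`,
so these integrals have a sign. In terms of random variables `X₀`, `X_t` with cdfs `F₀`, `F t` and
an independent `ξ ≥ 0` with exponential tail, the result is that `X_t + ξ` is stochastically
dominated by `X₀ + K t + ξ`, and `X₀ - ξ` by `X_t + K t - ξ`. Hence `(F t)⁻¹ - F₀⁻¹` has
exponential tails and lies in `L^p(0, 1)`: the flow moves every distribution by a finite
`W_p` distance, so it can neither create nor remove an infinite distance between two solutions. -/

section Monotone

variable {F Θ w : ℝ → ℝ} {m M ε : ℝ}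

theorem intervalIntegral_sub_shift_le (hF : Monotone F) (hFI : ∀ x, F x ∈ Icc m M) {a : ℝ}
    (ha : 0 ≤ a) (b c : ℝ) : ∫ x in b..c, (F x - F (x - a)) ≤ a * (M - m) := by
  have hint (u v : ℝ) : IntervalIntegrable F volume u v := hF.intervalIntegrable
  have hupper : ∫ x in c - a..c, F x ≤ a * M := by
    simpa using intervalIntegral.integral_mono_on (sub_le_self c ha) (hint _ _)
      intervalIntegrable_const fun x _ ↦ (hFI x).2
  have hlower : a * m ≤ ∫ x in b - a..b, F x := by
    simpa using intervalIntegral.integral_mono_on (sub_le_self b ha) intervalIntegrable_const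
      (hint _ _) fun x _ ↦ (hFI x).1
  calc ∫ x in b..c, (F x - F (x - a))
      = (∫ x in b..c, F x) - ∫ x in b - a..c - a, F x := by
        have hshift : IntervalIntegrable (fun x ↦ F (x - a)) volume b c := by
          simpa using (hint (b - a) (c - a)).comp_sub_right a
        rw [intervalIntegral.integral_sub (hint _ _) hshift,
          intervalIntegral.integral_comp_sub_right]
    _ = (∫ x in c - a..c, F x) - ∫ x in b - a..b, F x := by
        linarith [intervalIntegral.integral_interval_sub_interval_comm
          (hint b c) (hint (b - a) (c - a)) (hint b (b - a)),
          intervalIntegral.integral_symm (μ := volume) (f := F) (b - a) b,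
          intervalIntegral.integral_symm (μ := volume) (f := F) (c - a) c]
    _ ≤ a * (M - m) := by linarith

theorem lintegral_sub_shift_le (hF : Monotone F) (hFI : ∀ x, F x ∈ Icc m M) (a : ℝ) :
    ∫⁻ x, .ofReal (F x - F (x - a)) ≤ .ofReal (a * (M - m)) := by
  rcases le_total a 0 with ha | ha
  · have hzero (x : ℝ) : ENNReal.ofReal (F x - F (x - a)) = 0 :=
      ENNReal.ofReal_eq_zero.2 (sub_nonpos.2 (hF (by linarith)))
    simp [hzero]
  have hshift : Monotone fun x ↦ F (x - a) := fun x y hxy ↦ hF (by linarith)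
  have hmeas : Measurable fun x ↦ F x - F (x - a) := hF.measurable.sub hshift.measurable
  have hcover : AECover volume atTop fun n : ℕ ↦ Ioc (-n : ℝ) n :=
    aecover_Ioc (tendsto_neg_atTop_atBot.comp tendsto_natCast_atTop_atTop)
      tendsto_natCast_atTop_atTop
  refine le_of_tendsto' (hcover.lintegral_tendsto_of_countably_generated
    hmeas.ennreal_ofReal.aemeasurable) fun n ↦ ?_
  rw [← ofReal_integral_eq_lintegral_ofReal
      ((hF.intervalIntegrable (a := -n) (b := n)).sub hshift.intervalIntegrable).1
      (ae_of_all _ fun x ↦ sub_nonneg.2 (hF (sub_le_self x ha))),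
    ← intervalIntegral.integral_of_le (by linarith [n.cast_nonneg (α := ℝ)])]
  exact ENNReal.ofReal_le_ofReal (intervalIntegral_sub_shift_le hF hFI ha _ _)

theorem integrable_sub_shift (hF : Monotone F) (hFI : ∀ x, F x ∈ Icc m M) {a : ℝ} (ha : 0 ≤ a) :
    Integrable fun x ↦ F x - F (x - a) :=
  (lintegral_ofReal_ne_top_iff_integrable
    (hF.measurable.sub (hF.measurable.comp (measurable_sub_const a))).aestronglyMeasurable
    (ae_of_all _ fun x ↦ sub_nonneg.2 (hF (sub_le_self x ha)))).1
    ((lintegral_sub_shift_le hF hFI a).trans_lt ENNReal.ofReal_lt_top).ne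

theorem integral_sub_shift_le (hF : Monotone F) (hFI : ∀ x, F x ∈ Icc m M) {a : ℝ} (ha : 0 ≤ a) :
    ∫ x, (F x - F (x - a)) ≤ a * (M - m) := by
  have hmM : m ≤ M := (hFI 0).1.trans (hFI 0).2
  rw [← ENNReal.ofReal_le_ofReal_iff (mul_nonneg ha (sub_nonneg.2 hmM)),
    ofReal_integral_eq_lintegral_ofReal (integrable_sub_shift hF hFI ha)
      (ae_of_all _ fun x ↦ sub_nonneg.2 (hF (sub_le_self x ha)))]
  exact lintegral_sub_shift_le hF hFI a

theorem hasDerivAt_integral_mul_comp_add (hΘ : LocallyIntegrable Θ) (hw : ContDiff ℝ 1 w)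
    (hwc : HasCompactSupport w) :
    HasDerivAt (fun h ↦ ∫ x, Θ x * w (x + h)) (∫ x, Θ x * deriv w x) 0 := by
  have hΘneg : LocallyIntegrable (Θ ∘ Homeomorph.neg ℝ) := by
    rw [← locallyIntegrable_map_homeomorph]
    simpa [Homeomorph.neg] using hΘ
  have hconv (v : ℝ → ℝ) (h : ℝ) :
      (convolution (Θ ∘ Homeomorph.neg ℝ) v (ContinuousLinearMap.mul ℝ ℝ) volume) h
        = ∫ x, Θ x * v (x + h) := by
    rw [convolution_mul, ← integral_neg_eq_self]
    simp [add_comm]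
  have hderiv :=
    hwc.hasDerivAt_convolution_right (ContinuousLinearMap.mul ℝ ℝ) hΘneg hw 0
  rw [hconv, funext (hconv w)] at hderiv
  simpa only [add_zero] using hderiv

-- Integration by parts against the finite measure `dΘ`, whose mass is at most `M - m`.
theorem integral_mul_deriv_le_of_monotone (hΘ : Monotone Θ) (hΘI : ∀ x, Θ x ∈ Icc m M)
    (hw : ContDiff ℝ 1 w) (hwc : HasCompactSupport w) (hwε : ∀ x, -ε ≤ w x) :
    ∫ x, Θ x * deriv w x ≤ ε * (M - m) := by
  have hε : 0 ≤ ε := by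
    obtain ⟨x, hx⟩ := (ne_univ_iff_exists_notMem _).1 hwc.isCompact.ne_univ
    simpa [image_eq_zero_of_notMem_tsupport hx] using hwε x
  have hprod (h : ℝ) : Integrable fun x ↦ Θ (x - h) * w x :=
    LocallyIntegrable.integrable_smul_right_of_hasCompactSupport (f := fun x ↦ Θ (x - h))
      (Monotone.locallyIntegrable fun x y hxy ↦ hΘ (by linarith)) hw.continuous hwc
  have hprod₀ : Integrable fun x ↦ Θ x * w x := by simpa using hprod 0
  refine le_of_tendsto
    (hasDerivAt_integral_mul_comp_add hΘ.locallyIntegrable hw hwc).tendsto_slope_zero_right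
    (eventually_mem_nhdsWithin.mono fun h (hh : 0 < h) ↦ ?_)
  rw [zero_add, smul_eq_mul, inv_mul_le_iff₀ hh]
  calc (∫ x, Θ x * w (x + h)) - ∫ x, Θ x * w (x + 0)
      = (∫ x, Θ (x - h) * w x) - ∫ x, Θ x * w x := by
        rw [← integral_sub_right_eq_self (fun x ↦ Θ x * w (x + h)) h]
        simp only [sub_add_cancel, add_zero]
    _ = ∫ x, (Θ (x - h) * w x - Θ x * w x) := (integral_sub (hprod h) hprod₀).symm
    _ ≤ ∫ x, ε * (Θ x - Θ (x - h)) := by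
        refine integral_mono ((hprod h).sub hprod₀)
          ((integrable_sub_shift hΘ hΘI hh.le).const_mul ε) fun x ↦ ?_
        simp only
        nlinarith [hwε x, hΘ (sub_le_self x hh.le)]
    _ = ε * ∫ x, (Θ x - Θ (x - h)) := integral_const_mul _ _
    _ ≤ ε * (h * (M - m)) :=
        mul_le_mul_of_nonneg_left (integral_sub_shift_le hΘ hΘI hh.le) hε
    _ = h * (ε * (M - m)) := by ring

end Monotone

section Cdf

variable (μ : Measure ℝ) [IsProbabilityMeasure μ] {u x : ℝ}

theorem cdfOf_eq_cdf : cdfOf μ = ProbabilityTheory.cdf μ :=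
  funext fun x ↦ (ProbabilityTheory.cdf_eq_real μ x).symm

theorem monotone_cdfOf : Monotone (cdfOf μ) :=
  cdfOf_eq_cdf μ ▸ ProbabilityTheory.monotone_cdf μ

theorem cdfOf_mem_Icc (x : ℝ) : cdfOf μ x ∈ Icc (0 : ℝ) 1 :=
  ⟨ENNReal.toReal_nonneg, measureReal_le_one⟩

theorem nonempty_lt_cdfOf (hu : u < 1) : {x | u < cdfOf μ x}.Nonempty := by
  rw [cdfOf_eq_cdf]
  exact ((ProbabilityTheory.tendsto_cdf_atTop μ).eventually_const_lt hu).exists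

theorem bddBelow_lt_cdfOf (hu : 0 < u) : BddBelow {x | u < cdfOf μ x} := by
  have htendsto := cdfOf_eq_cdf μ ▸ ProbabilityTheory.tendsto_cdf_atBot μ
  obtain ⟨x, hx⟩ := (htendsto.eventually_lt_const hu).exists
  exact ⟨x, fun y hy ↦ le_of_not_gt fun hyx ↦
    (hx.trans hy).not_ge (monotone_cdfOf μ hyx.le)⟩

theorem le_cdfOf_of_pinv_lt (hu : u < 1) (hx : pinv (cdfOf μ) u < x) : u ≤ cdfOf μ x := by
  obtain ⟨y, hy, hyx⟩ := exists_lt_of_csInf_lt (nonempty_lt_cdfOf μ hu) hx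
  exact hy.le.trans (monotone_cdfOf μ hyx.le)

theorem cdfOf_le_of_lt_pinv (hu : 0 < u) (hx : x < pinv (cdfOf μ) u) : cdfOf μ x ≤ u :=
  not_lt.1 fun hux ↦ hx.not_ge (csInf_le (bddBelow_lt_cdfOf μ hu) hux)

theorem monotoneOn_pinv_cdfOf : MonotoneOn (pinv (cdfOf μ)) (Ioo 0 1) := fun _ hu _ hv huv ↦
  csInf_le_csInf (bddBelow_lt_cdfOf μ hu.1) (nonempty_lt_cdfOf μ hv.2) fun _ hx ↦ huv.trans_lt hx

theorem aemeasurable_pinv_cdfOf :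
    AEMeasurable (pinv (cdfOf μ)) (volume.restrict (Ioo (0 : ℝ) 1)) :=
  aemeasurable_restrict_of_monotoneOn measurableSet_Ioo (monotoneOn_pinv_cdfOf μ)

end Cdf

section Kernel

open ProbabilityTheory

theorem measurable_cdfOf_kernel (κ : Kernel ℝ ℝ) [IsMarkovKernel κ] :
    Measurable fun q : ℝ × ℝ ↦ cdfOf (κ q.1) q.2 := by
  have hset : MeasurableSet {q : (ℝ × ℝ) × ℝ | q.2 ≤ q.1.2} :=
    measurableSet_le measurable_snd (measurable_snd.comp measurable_fst)
  exact (Kernel.measurable_kernel_prodMk_left (κ := κ.comap Prod.fst measurable_fst)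
    hset).ennreal_toReal

theorem measurable_toMeasure_of_continuous {X Y : Type*} [TopologicalSpace X] [MeasurableSpace X]
    [OpensMeasurableSpace X] [PseudoEMetricSpace Y] [MeasurableSpace Y] [BorelSpace Y]
    {P : X → ProbabilityMeasure Y} (hP : Continuous P) : Measurable fun s ↦ (P s : Measure Y) := by
  refine Measurable.measure_of_isPiSystem_of_isProbabilityMeasure
    (BorelSpace.measurable_eq.trans borel_eq_generateFrom_isClosed) isPiSystem_isClosed
    fun C hC ↦ ?_
  have hδ (n : ℕ) : (0 : ℝ) < 1 / ((n : ℝ) + 1) := Nat.one_div_pos_of_nat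
  refine measurable_of_tendsto_metrizable
    (f := fun n s ↦ ∫⁻ y, thickenedIndicator (hδ n) C y ∂(P s : Measure Y)) (fun n ↦ ?_) ?_
  · exact (continuous_iff_continuousAt.2 fun s ↦
      ProbabilityMeasure.tendsto_iff_forall_lintegral_tendsto.1 hP.continuousAt _).measurable
  · exact tendsto_pi_nhds.2 fun s ↦ tendsto_lintegral_thickenedIndicator_of_isClosed _
      hC hδ tendsto_one_div_add_atTop_nhds_zero_nat

theorem MemF.exists_kernel {F : ℝ → ℝ → ℝ} (hF : MemF F) :
    ∃ κ : Kernel ℝ ℝ, IsMarkovKernel κ ∧ ∀ t, 0 ≤ t → F t = cdfOf (κ t) := by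
  obtain ⟨P, hP, -, -, hFP⟩ := hF
  have hcont : Continuous fun s ↦ P (max s 0) :=
    hP.comp_continuous (by fun_prop) fun s ↦ le_max_right s 0
  refine ⟨⟨_, measurable_toMeasure_of_continuous hcont⟩,
    ⟨fun s ↦ inferInstanceAs (IsProbabilityMeasure (P (max s 0) : Measure ℝ))⟩, fun t ht ↦ ?_⟩
  funext x
  simp only [hFP t ht x, cdfOf, Kernel.coe_mk, max_eq_left ht]

end Kernel

section Primitive

variable {f : ℝ → ℝ}

theorem primitive_sub_primitive (hf : ContinuousOn f (Icc 0 1)) {u v : ℝ}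
    (hu : u ∈ Icc (0 : ℝ) 1) (hv : v ∈ Icc (0 : ℝ) 1) :
    primitive f v - primitive f u = ∫ r in u..v, f r := by
  have hint (w : ℝ) (hw : w ∈ Icc (0 : ℝ) 1) : IntervalIntegrable f volume 0 w :=
    (hf.mono (uIcc_subset_Icc (left_mem_Icc.2 zero_le_one) hw)).intervalIntegrable
  exact intervalIntegral.integral_interval_sub_left (hint v hv) (hint u hu)

theorem exists_lipschitzOnWith_primitive (hf : ContinuousOn f (Icc 0 1)) :
    ∃ L, LipschitzOnWith L (primitive f) (Icc 0 1) := by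
  obtain ⟨L, hL⟩ := (isCompact_Icc (a := (0 : ℝ)) (b := 1)).exists_bound_of_continuousOn hf
  refine ⟨L.toNNReal, LipschitzOnWith.of_dist_le_mul fun v hv u hu ↦ ?_⟩
  rw [dist_eq_norm, primitive_sub_primitive hf hu hv, Real.dist_eq]
  refine intervalIntegral.norm_integral_le_of_norm_le_const fun r hr ↦ ?_
  exact (hL r (uIcc_subset_Icc hu hv (uIoc_subset_uIcc hr))).trans (Real.le_coe_toNNReal L)

end Primitive

section TravelingTest

/-- A smooth cutoff in time, equal to `1` for `|s| ≤ |t| + 1`. -/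
def timeCutoff (t : ℝ) : ContDiffBump (0 : ℝ) := ⟨|t| + 1, |t| + 2, by positivity, by linarith⟩

/-- The profile `k` travelling with velocity `v`. The cutoff in time makes it a compactly supported
test function without altering it near the times in `[0, t]`. -/
def travelingTest (t v : ℝ) (k : ℝ → ℝ) (s x : ℝ) : ℝ := timeCutoff t s * k (x - v * s)

variable {t s : ℝ} {k : ℝ → ℝ}

theorem contDiff_travelingTest (t v : ℝ) (hk : ContDiff ℝ (⊤ : ℕ∞) k) :
    ContDiff ℝ (⊤ : ℕ∞) (uncurry (travelingTest t v k)) :=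
  ((timeCutoff t).contDiff.comp contDiff_fst).mul
    (hk.comp (f := fun q : ℝ × ℝ ↦ q.2 - v * q.1) (by fun_prop))

theorem hasCompactSupport_travelingTest (t v : ℝ) (hk : HasCompactSupport k) :
    HasCompactSupport (uncurry (travelingTest t v k)) := by
  refine HasCompactSupport.intro (((timeCutoff t).hasCompactSupport.prod hk).image
    (f := fun q : ℝ × ℝ ↦ (q.1, q.2 + v * q.1)) (by fun_prop)) ?_
  rintro ⟨s, x⟩ hsx
  contrapose! hsx
  refine ⟨(s, x - v * s), ⟨subset_tsupport _ (left_ne_zero_of_mul hsx),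
    subset_tsupport _ (right_ne_zero_of_mul hsx)⟩, by simp⟩

theorem travelingTest_eventuallyEq (v : ℝ) (k : ℝ → ℝ) (hs : s ∈ Icc 0 t) :
    ∀ᶠ r in 𝓝 s, travelingTest t v k r = fun x ↦ k (x - v * r) := by
  have hs' : s ∈ Metric.ball (0 : ℝ) (|t| + 1) := by
    rw [mem_ball_zero_iff, Real.norm_of_nonneg hs.1]
    linarith [hs.2, le_abs_self t]
  filter_upwards [Metric.isOpen_ball.mem_nhds hs'] with r hr
  funext x
  rw [travelingTest, (timeCutoff t).one_of_mem_closedBall (Metric.ball_subset_closedBall hr),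
    one_mul]

theorem travelingTest_eq (v : ℝ) (k : ℝ → ℝ) (hs : s ∈ Icc 0 t) :
    travelingTest t v k s = fun x ↦ k (x - v * s) :=
  (travelingTest_eventuallyEq v k hs).self_of_nhds

theorem deriv_travelingTest_time (v : ℝ) (hk : Differentiable ℝ k) (hs : s ∈ Icc 0 t) (x : ℝ) :
    deriv (fun r ↦ travelingTest t v k r x) s = -v * deriv k (x - v * s) := by
  have heq : (fun r ↦ travelingTest t v k r x) =ᶠ[𝓝 s] fun r ↦ k (x - v * r) :=
    (travelingTest_eventuallyEq v k hs).mono fun r hr ↦ congrFun hr x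
  have hshift : HasDerivAt (fun r ↦ x - v * r) (-v) s := by
    simpa using ((hasDerivAt_id s).const_mul v).const_sub x
  rw [heq.deriv_eq, mul_comm]
  exact ((hk (x - v * s)).hasDerivAt.comp s hshift).deriv

end TravelingTest

/-- A jointly measurable family of nondecreasing functions with values in `[0, 1]`: the properties
of the flow of distribution functions on which the comparison argument relies. -/
structure IsMonotoneFlow (F : ℝ → ℝ → ℝ) : Prop where
  measurable : Measurable (uncurry F)
  monotone : ∀ s, Monotone (F s)
  mem_Icc : ∀ s x, F s x ∈ Icc (0 : ℝ) 1

section WeakSolution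

variable {A B F₀ f k : ℝ → ℝ} {F F' : ℝ → ℝ → ℝ} {K σ t ε : ℝ}

theorem IsWeakSolution.congr (hF : IsWeakSolution A B F₀ F)
    (hFF' : ∀ t, 0 ≤ t → F t = F' t) : IsWeakSolution A B F₀ F' := by
  intro g hg hgc t ht
  rw [← hFF' t ht, hF g hg hgc t ht]
  refine integral_congr_ae (ae_of_all _ fun x ↦ intervalIntegral.integral_congr fun s hs ↦ ?_)
  rw [uIcc_of_le ht] at hs
  simp only [hFF' s hs.1]

theorem IsWeakSolution.integral_traveling (hF : IsWeakSolution A B F₀ F) (v : ℝ) (ht : 0 ≤ t)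
    (hk : ContDiff ℝ (⊤ : ℕ∞) k) (hkc : HasCompactSupport k) :
    (∫ x, k (x - v * t) * F t x) - ∫ x, k x * F₀ x =
      ∫ x, ∫ s in (0 : ℝ)..t, ((1 / 2) * A (F s x) * deriv (deriv k) (x - v * s) +
        (B (F s x) - v * F s x) * deriv k (x - v * s)) := by
  have hweak := hF (travelingTest t v k) (contDiff_travelingTest t v hk)
    (hasCompactSupport_travelingTest t v hkc) t ht
  simp only [travelingTest_eq v k (right_mem_Icc.2 ht), travelingTest_eq v k (left_mem_Icc.2 ht),
    mul_zero, sub_zero] at hweak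
  rw [hweak]
  refine integral_congr_ae (ae_of_all _ fun x ↦ intervalIntegral.integral_congr fun s hs ↦ ?_)
  rw [uIcc_of_le ht] at hs
  have hderiv (ψ : ℝ → ℝ) : (deriv fun y ↦ ψ (y - v * s)) = fun y ↦ deriv ψ (y - v * s) :=
    funext fun y ↦ deriv_comp_sub_const ..
  simp only [deriv_travelingTest_time v (hk.differentiable (by simp)) hs,
    travelingTest_eq v k hs, hderiv]
  ring

theorem integrable_comp_mul_traveling {Z : ℝ → ℝ} {ψ : ℝ → ℝ} (μ : Measure ℝ) [IsFiniteMeasure μ]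
    (hZ : ContinuousOn Z (Icc 0 1)) (hF : Measurable (uncurry F))
    (hFI : ∀ s x, F s x ∈ Icc (0 : ℝ) 1) (hψ : Continuous ψ) (hψc : HasCompactSupport ψ) (v : ℝ) :
    Integrable (fun q : ℝ × ℝ ↦ Z (F q.1 q.2) * ψ (q.2 - v * q.1)) (μ.prod volume) := by
  have hψint : Integrable ψ := hψ.integrable_of_hasCompactSupport hψc
  have htravel : Integrable (fun q : ℝ × ℝ ↦ ψ (q.2 - v * q.1)) (μ.prod volume) := by
    rw [integrable_prod_iff (by fun_prop)]
    refine ⟨ae_of_all _ fun s ↦ hψint.comp_sub_right (v * s), ?_⟩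
    simp only [integral_sub_right_eq_self fun x ↦ ‖ψ x‖, integrable_const]
  have hZF : Measurable fun q : ℝ × ℝ ↦ Z (F q.1 q.2) :=
    hZ.domRestrict.measurable.comp (hF.subtype_mk (h := fun q ↦ hFI q.1 q.2))
  obtain ⟨C, hC⟩ := (isCompact_Icc (a := (0 : ℝ)) (b := 1)).exists_bound_of_continuousOn hZ
  exact htravel.bdd_mul (c := C) hZF.aestronglyMeasurable (ae_of_all _ fun q ↦ hC _ (hFI _ _))

theorem exists_monotoneOn_speed {L L' : NNReal} (hA : LipschitzOnWith L A (Icc 0 1))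
    (hB : LipschitzOnWith L' B (Icc 0 1)) :
    ∃ K : ℝ, ∀ σ, σ * σ = 1 →
      MonotoneOn (fun u ↦ K * u - (1 / 2) * A u - σ * B u) (Icc 0 1) := by
  refine ⟨L / 2 + L', fun σ hσ u hu v hv huv ↦ ?_⟩
  have hAuv := abs_le.1 (hA.dist_le_mul v hv u hu)
  have hBuv := abs_le.1 (hB.dist_le_mul v hv u hu)
  rw [Real.dist_eq, abs_of_nonneg (sub_nonneg.2 huv)] at hAuv hBuv
  rcases mul_self_eq_one_iff.1 hσ with rfl | rfl <;> linarith

theorem integral_flux_le (hσ : σ * σ = 1) (hA : MonotoneOn A (Icc 0 1))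
    (hK : MonotoneOn (fun u ↦ K * u - (1 / 2) * A u - σ * B u) (Icc 0 1))
    (hf : Monotone f) (hfI : ∀ x, f x ∈ Icc (0 : ℝ) 1)
    (hk : ContDiff ℝ 2 k) (hkc : HasCompactSupport k)
    (hk0 : ∀ x, 0 ≤ k x) (hkε : ∀ x, σ * deriv k x ≤ k x + ε) :
    -σ * ∫ x, ((1 / 2) * A (f x) * deriv (deriv k) x + (B (f x) - σ * K * f x) * deriv k x) ≤
      (1 / 2) * (ε * (A 1 - A 0)) := by
  -- Writing `σ K u - B u` as `σ (½ A u + Φ u)` with `Φ` nondecreasing turns the flux into `½ A`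
  -- tested against the derivative of `k - σ k'` plus `Φ` tested against the derivative of `k`.
  have hk1 : ContDiff ℝ 1 (deriv k) := (contDiff_succ_iff_deriv.1 hk).2.2
  have hw : ContDiff ℝ 1 fun x ↦ k x - σ * deriv k x :=
    (hk.of_le one_le_two).sub (contDiff_const.mul hk1)
  have hwc : HasCompactSupport fun x ↦ k x - σ * deriv k x := hkc.sub hkc.deriv.mul_left
  have hderivw : (deriv fun x ↦ k x - σ * deriv k x) = fun x ↦ deriv k x - σ * deriv (deriv k) x :=
    funext fun x ↦ ((hk.differentiable two_ne_zero x).hasDerivAt.sub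
      ((hk1.differentiable one_ne_zero x).hasDerivAt.const_mul σ)).deriv
  have hAf : Monotone fun x ↦ A (f x) := fun x y hxy ↦ hA (hfI x) (hfI y) (hf hxy)
  have hΦ : Monotone fun x ↦ K * f x - (1 / 2) * A (f x) - σ * B (f x) :=
    fun x y hxy ↦ hK (hfI x) (hfI y) (hf hxy)
  have hdiffusion :=
    integral_mul_deriv_le_of_monotone hAf (fun x ↦ hA.mapsTo_Icc (hfI x)) hw hwc (ε := ε)
      fun x ↦ by linarith [hkε x]
  have hdrift :=
    integral_mul_deriv_le_of_monotone hΦ (fun x ↦ hK.mapsTo_Icc (hfI x)) (hk.of_le one_le_two) hkc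
      (ε := 0) (by simpa using hk0)
  have hint {Θ ψ : ℝ → ℝ} (hΘ : Monotone Θ) (hψ : Continuous ψ) (hψc : HasCompactSupport ψ) :
      Integrable fun x ↦ Θ x * ψ x :=
    hΘ.locallyIntegrable.integrable_smul_right_of_hasCompactSupport hψ hψc
  rw [hderivw] at hdiffusion
  calc _ = ∫ x, ((1 / 2) * (A (f x) * (deriv k x - σ * deriv (deriv k) x)) +
          (K * f x - (1 / 2) * A (f x) - σ * B (f x)) * deriv k x) := by
        rw [← integral_const_mul]
        refine integral_congr_ae (ae_of_all _ fun x ↦ ?_)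
        linear_combination (K * f x * deriv k x) * hσ
    _ = (1 / 2) * (∫ x, A (f x) * (deriv k x - σ * deriv (deriv k) x)) +
          ∫ x, (K * f x - (1 / 2) * A (f x) - σ * B (f x)) * deriv k x := by
        rw [integral_add _ (hint hΦ hk1.continuous hkc.deriv), integral_const_mul]
        exact (hderivw ▸ hint hAf (hw.continuous_deriv le_rfl) hwc.deriv).const_mul _
    _ ≤ (1 / 2) * (ε * (A 1 - A 0)) := by linarith

theorem IsWeakSolution.integral_traveling_le (hF : IsWeakSolution A B F₀ F) (hσ : σ * σ = 1)
    (hA : MonotoneOn A (Icc 0 1)) (hAc : ContinuousOn A (Icc 0 1)) (hBc : ContinuousOn B (Icc 0 1))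
    (hK : MonotoneOn (fun u ↦ K * u - (1 / 2) * A u - σ * B u) (Icc 0 1))
    (hF' : IsMonotoneFlow F) (ht : 0 ≤ t) (hk : ContDiff ℝ (⊤ : ℕ∞) k)
    (hkc : HasCompactSupport k) (hk0 : ∀ x, 0 ≤ k x) (hkε : ∀ x, σ * deriv k x ≤ k x + ε) :
    -σ * ((∫ x, k (x - σ * K * t) * F t x) - ∫ x, k x * F₀ x) ≤
      t * ((1 / 2) * (ε * (A 1 - A 0))) := by
  set J : ℝ → ℝ → ℝ := fun s x ↦ (1 / 2) * A (F s x) * deriv (deriv k) (x - σ * K * s) +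
    (B (F s x) - σ * K * F s x) * deriv k (x - σ * K * s) with hJ
  have hk2 : ContDiff ℝ 2 k := contDiff_infty.1 hk 2
  have hk1 : ContDiff ℝ 1 (deriv k) := (contDiff_succ_iff_deriv.1 hk2).2.2
  have hJint : Integrable (uncurry J) ((volume.restrict (uIoc 0 t)).prod volume) := by
    have : IsFiniteMeasure (volume.restrict (uIoc 0 t)) := ⟨by simp [uIoc]⟩
    exact (integrable_comp_mul_traveling _ (continuousOn_const.mul hAc) hF'.measurable hF'.mem_Icc
      (hk1.continuous_deriv le_rfl) hkc.deriv.deriv _).add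
        (integrable_comp_mul_traveling (Z := fun u ↦ B u - σ * K * u) _ (hBc.sub (by fun_prop))
          hF'.measurable hF'.mem_Icc hk1.continuous hkc.deriv _)
  have hslice (s : ℝ) : -σ * ∫ x, J s x ≤ (1 / 2) * (ε * (A 1 - A 0)) := by
    rw [← integral_add_right_eq_self (J s) (σ * K * s)]
    simpa only [hJ, add_sub_cancel_right] using integral_flux_le hσ hA hK
      (fun x y hxy ↦ hF'.monotone s (add_le_add_left hxy (σ * K * s))) (fun x ↦ hF'.mem_Icc s _)
      hk2 hkc hk0 hkε
  rw [hF.integral_traveling _ ht hk hkc, ← intervalIntegral_integral_swap hJint,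
    ← intervalIntegral.integral_const_mul]
  calc ∫ s in (0 : ℝ)..t, -σ * ∫ x, J s x
      ≤ ∫ _ in (0 : ℝ)..t, (1 / 2) * (ε * (A 1 - A 0)) :=
        intervalIntegral.integral_mono_on ht
          ((intervalIntegrable_iff.2 hJint.integral_prod_left).const_mul _)
          intervalIntegrable_const fun s _ ↦ hslice s
    _ = t * ((1 / 2) * (ε * (A 1 - A 0))) := by
        rw [intervalIntegral.integral_const, sub_zero, smul_eq_mul]

end WeakSolution

section ExpBump

open Real

/-- A smooth nonnegative kernel on `(0, ∞)`, equal to `exp (-r)` for `1 ≤ r`. It is the profile of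
the test functions, chosen so that minus its derivative is at most the kernel itself. -/
def expBump (r : ℝ) : ℝ := exp (-r) * smoothTransition r

/-- The smooth truncation of `expBump` to `(0, R)`, which makes it an admissible profile. -/
def expBumpTrunc (R r : ℝ) : ℝ := expBump r * smoothTransition (R - r)

variable {r : ℝ}

theorem expBump_nonneg (r : ℝ) : 0 ≤ expBump r :=
  mul_nonneg (exp_nonneg _) (smoothTransition.nonneg r)

theorem expBump_le_exp_neg (r : ℝ) : expBump r ≤ exp (-r) :=
  mul_le_of_le_one_right (exp_nonneg _) (smoothTransition.le_one r)

theorem expBump_of_nonpos (hr : r ≤ 0) : expBump r = 0 := by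
  rw [expBump, smoothTransition.zero_of_nonpos hr, mul_zero]

theorem contDiff_expBump : ContDiff ℝ (⊤ : ℕ∞) expBump :=
  (contDiff_exp.comp contDiff_neg).mul smoothTransition.contDiff

theorem integrable_expBump : Integrable expBump := by
  have hsupport : IntegrableOn expBump (Ioi 0) :=
    (integrableOn_exp_neg_Ioi 0).mono' contDiff_expBump.continuous.aestronglyMeasurable
      (ae_of_all _ fun r ↦ by
        rw [norm_of_nonneg (expBump_nonneg r)]
        exact expBump_le_exp_neg r)
  exact (integrableOn_iff_integrable_of_support_subset fun r hr ↦
    not_le.1 fun hr0 ↦ hr (expBump_of_nonpos hr0)).1 hsupport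

theorem integral_expBump_pos : 0 < ∫ r, expBump r :=
  integral_pos_of_integrable_nonneg_nonzero (x := 1) contDiff_expBump.continuous integrable_expBump
    expBump_nonneg (by simp [expBump])

theorem expBumpTrunc_nonneg (R r : ℝ) : 0 ≤ expBumpTrunc R r :=
  mul_nonneg (expBump_nonneg r) (smoothTransition.nonneg _)

theorem expBumpTrunc_le (R r : ℝ) : expBumpTrunc R r ≤ expBump r :=
  mul_le_of_le_one_right (expBump_nonneg r) (smoothTransition.le_one _)

theorem contDiff_expBumpTrunc (R : ℝ) : ContDiff ℝ (⊤ : ℕ∞) (expBumpTrunc R) :=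
  contDiff_expBump.mul (smoothTransition.contDiff.comp (contDiff_const.sub contDiff_id))

theorem hasCompactSupport_expBumpTrunc (R : ℝ) : HasCompactSupport (expBumpTrunc R) := by
  refine HasCompactSupport.intro (isCompact_Icc (a := 0) (b := R)) fun r hr ↦ ?_
  rw [expBumpTrunc]
  rcases lt_or_ge r 0 with hr0 | hr0
  · rw [expBump_of_nonpos hr0.le, zero_mul]
  · rw [smoothTransition.zero_of_nonpos (sub_nonpos.2 (le_of_not_ge fun h ↦ hr ⟨hr0, h⟩)), mul_zero]

theorem tendsto_expBumpTrunc (r : ℝ) :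
    Tendsto (fun n : ℕ ↦ expBumpTrunc n r) atTop (𝓝 (expBump r)) := by
  refine tendsto_const_nhds.congr' ?_
  filter_upwards [tendsto_natCast_atTop_atTop.eventually_ge_atTop (r + 1)] with n hn
  rw [expBumpTrunc, smoothTransition.one_of_one_le (by linarith), mul_one]

theorem hasCompactSupport_deriv_smoothTransition :
    HasCompactSupport (deriv smoothTransition) := by
  refine HasCompactSupport.intro (isCompact_Icc (a := 0) (b := 1)) fun x hx ↦ ?_
  rcases lt_or_ge x 0 with hx0 | hx0
  · refine IsLocalMin.deriv_eq_zero (Eventually.of_forall fun y ↦ ?_)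
    rw [smoothTransition.zero_of_nonpos hx0.le]
    exact smoothTransition.nonneg y
  · refine IsLocalMax.deriv_eq_zero (Eventually.of_forall fun y ↦ ?_)
    rw [smoothTransition.one_of_one_le (le_of_not_ge fun h ↦ hx ⟨hx0, h⟩)]
    exact smoothTransition.le_one y

theorem exists_neg_deriv_expBumpTrunc_le :
    ∃ C, ∀ R r, -deriv (expBumpTrunc R) r ≤ expBumpTrunc R r + C * exp (-R) := by
  have hsmooth : ContDiff ℝ 1 smoothTransition := smoothTransition.contDiff
  have hdiff (x : ℝ) : HasDerivAt smoothTransition (deriv smoothTransition x) x :=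
    (hsmooth.differentiable one_ne_zero x).hasDerivAt
  obtain ⟨C, hC⟩ := (hasCompactSupport_deriv_smoothTransition.mul_left
    (f := exp)).exists_bound_of_continuous
      (continuous_exp.mul (hsmooth.continuous_deriv le_rfl))
  refine ⟨C, fun R r ↦ ?_⟩
  have hderiv : deriv (expBumpTrunc R) r =
      (-exp (-r) * smoothTransition r + exp (-r) * deriv smoothTransition r) *
        smoothTransition (R - r) - expBump r * deriv smoothTransition (R - r) := by
    have hexp : HasDerivAt (fun r ↦ exp (-r)) (-exp (-r)) r := by
      simpa using (hasDerivAt_neg r).exp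
    have hcut : HasDerivAt (fun r ↦ smoothTransition (R - r))
        (-deriv smoothTransition (R - r)) r := (hdiff (R - r)).comp_const_sub R r
    exact ((hexp.mul (hdiff r)).mul hcut).deriv.trans (by simp only [expBump, Pi.mul_apply]; ring)
  have hrise : 0 ≤ exp (-r) * deriv smoothTransition r * smoothTransition (R - r) :=
    mul_nonneg (mul_nonneg (exp_nonneg _) smoothTransition.monotone.deriv_nonneg)
      (smoothTransition.nonneg _)
  have hfall : expBump r * deriv smoothTransition (R - r) ≤ C * exp (-R) :=
    calc expBump r * deriv smoothTransition (R - r)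
        ≤ exp (-r) * deriv smoothTransition (R - r) :=
          mul_le_mul_of_nonneg_right (expBump_le_exp_neg r) smoothTransition.monotone.deriv_nonneg
      _ = (exp (R - r) * deriv smoothTransition (R - r)) * exp (-R) := by
          rw [mul_right_comm, ← exp_add]
          ring_nf
      _ ≤ C * exp (-R) :=
          mul_le_mul_of_nonneg_right ((le_abs_self _).trans (hC (R - r))) (exp_nonneg _)
  rw [hderiv, expBumpTrunc, expBump] at *
  linarith

theorem tendsto_integral_expBumpTrunc_mul {g : ℝ → ℝ} (hg : Measurable g)
    (hgI : ∀ r, g r ∈ Icc (0 : ℝ) 1) :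
    Tendsto (fun n : ℕ ↦ ∫ r, expBumpTrunc n r * g r) atTop (𝓝 (∫ r, expBump r * g r)) := by
  refine tendsto_integral_of_dominated_convergence expBump
    (fun n ↦ ((contDiff_expBumpTrunc n).continuous.measurable.mul hg).aestronglyMeasurable)
    integrable_expBump (fun n ↦ ae_of_all _ fun r ↦ ?_)
    (ae_of_all _ fun r ↦ (tendsto_expBumpTrunc r).mul_const _)
  rw [norm_of_nonneg (mul_nonneg (expBumpTrunc_nonneg n r) (hgI r).1)]
  exact (mul_le_of_le_one_right (expBumpTrunc_nonneg n r) (hgI r).2).trans (expBumpTrunc_le n r)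

end ExpBump

section Reflection

variable {σ : ℝ} {ψ : ℝ → ℝ}

theorem integral_reflect (hσ : σ * σ = 1) (ψ g : ℝ → ℝ) (c : ℝ) :
    ∫ x, ψ (σ * (c - x)) * g x = ∫ r, ψ r * g (c - σ * r) := by
  rcases mul_self_eq_one_iff.1 hσ with rfl | rfl
  · rw [← integral_sub_left_eq_self _ volume c]
    simp
  · rw [← integral_add_left_eq_self _ c]
    simp

theorem hasCompactSupport_reflect (hσ : σ * σ = 1) (hψ : HasCompactSupport ψ) (c : ℝ) :
    HasCompactSupport fun x ↦ ψ (σ * (c - x)) := by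
  rcases mul_self_eq_one_iff.1 hσ with rfl | rfl
  · simpa [Function.comp_def] using hψ.comp_homeomorph (Homeomorph.subLeft c)
  · simpa [Function.comp_def] using hψ.comp_homeomorph (Homeomorph.subRight c)

theorem mul_deriv_reflect (hσ : σ * σ = 1) (hψ : Differentiable ℝ ψ) (c x : ℝ) :
    σ * deriv (fun x ↦ ψ (σ * (c - x))) x = -deriv ψ (σ * (c - x)) := by
  have hreflect : HasDerivAt (fun x ↦ σ * (c - x)) (-σ) x := by
    simpa using ((hasDerivAt_id x).const_sub c).const_mul σ
  have hcomp : HasDerivAt (fun x ↦ ψ (σ * (c - x))) (deriv ψ (σ * (c - x)) * -σ) x :=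
    (hψ _).hasDerivAt.comp x hreflect
  rw [hcomp.deriv]
  linear_combination -deriv ψ (σ * (c - x)) * hσ

end Reflection

section WeakSolution

variable {A B F₀ : ℝ → ℝ} {F : ℝ → ℝ → ℝ} {K σ t : ℝ}

theorem IsWeakSolution.integral_expBump_le (hF : IsWeakSolution A B F₀ F) (hσ : σ * σ = 1)
    (hA : MonotoneOn A (Icc 0 1)) (hAc : ContinuousOn A (Icc 0 1)) (hBc : ContinuousOn B (Icc 0 1))
    (hK : MonotoneOn (fun u ↦ K * u - (1 / 2) * A u - σ * B u) (Icc 0 1))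
    (hF' : IsMonotoneFlow F) (hF₀ : Measurable F₀) (hF₀I : ∀ x, F₀ x ∈ Icc (0 : ℝ) 1)
    (ht : 0 ≤ t) (c : ℝ) :
    σ * ∫ r, expBump r * F₀ (c - σ * r) ≤
      σ * ∫ r, expBump r * F t (c + σ * K * t - σ * r) := by
  obtain ⟨C, hC⟩ := exists_neg_deriv_expBumpTrunc_le
  have htrunc (n : ℕ) :
      -σ * ((∫ r, expBumpTrunc n r * F t (c + σ * K * t - σ * r)) -
        ∫ r, expBumpTrunc n r * F₀ (c - σ * r)) ≤
        t * ((1 / 2) * (C * Real.exp (-n) * (A 1 - A 0))) := by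
    have hdiff : Differentiable ℝ (expBumpTrunc n) :=
      (contDiff_expBumpTrunc n).differentiable (by simp)
    have htravel := hF.integral_traveling_le hσ hA hAc hBc hK hF' ht
      (k := fun x ↦ expBumpTrunc n (σ * (c - x))) ((contDiff_expBumpTrunc n).comp (by fun_prop))
      (hasCompactSupport_reflect hσ (hasCompactSupport_expBumpTrunc n) c)
      (fun x ↦ expBumpTrunc_nonneg _ _)
      (fun x ↦ by rw [mul_deriv_reflect hσ hdiff]; exact hC n _)
    rw [← integral_reflect hσ, ← integral_reflect hσ]
    convert htravel using 7
    ring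
  have hlim : Tendsto (fun n : ℕ ↦ t * ((1 / 2) * (C * Real.exp (-n) * (A 1 - A 0)))) atTop
      (𝓝 0) := by
    have hexp : Tendsto (fun n : ℕ ↦ Real.exp (-n)) atTop (𝓝 0) :=
      Real.tendsto_exp_neg_atTop_nhds_zero.comp tendsto_natCast_atTop_atTop
    simpa only [mul_zero, zero_mul] using
      (((hexp.const_mul C).mul_const (A 1 - A 0)).const_mul (1 / 2)).const_mul t
  have hmeas {g : ℝ → ℝ} (hg : Measurable g) (e : ℝ) : Measurable fun r ↦ g (e - σ * r) :=
    hg.comp (by fun_prop)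
  have hle := le_of_tendsto_of_tendsto' (((tendsto_integral_expBumpTrunc_mul
    (hmeas (hF'.monotone t).measurable _) fun r ↦ hF'.mem_Icc t _).sub
    (tendsto_integral_expBumpTrunc_mul (hmeas hF₀ c) fun r ↦ hF₀I _)).const_mul (-σ)) hlim htrunc
  linarith

end WeakSolution

section Comparison

open Real

variable {F G P δ Δ : ℝ → ℝ} {m d h : ℝ}

theorem ofReal_integral_le_lintegral {α : Type*} [MeasurableSpace α] {μ : Measure α} (f : α → ℝ) :
    ENNReal.ofReal (∫ x, f x ∂μ) ≤ ∫⁻ x, .ofReal (f x) ∂μ := by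
  by_cases hf : Integrable f μ
  · refine ENNReal.ofReal_le_of_le_toReal ?_
    rw [integral_eq_lintegral_pos_part_sub_lintegral_neg_part hf]
    exact sub_le_self _ ENNReal.toReal_nonneg
  · rw [integral_undef hf, ENNReal.ofReal_zero]
    exact zero_le

theorem lintegral_exp_neg_mul_rpow {s : ℝ} (hs : 0 < s) :
    ∫⁻ x in Ioi 0, .ofReal (exp (-x) * x ^ (s - 1)) = .ofReal (Gamma s) := by
  rw [Gamma_eq_integral hs]
  exact (ofReal_integral_eq_lintegral_ofReal (GammaIntegral_convergent hs)
    (ae_restrict_of_forall_mem measurableSet_Ioi fun x hx ↦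
      mul_nonneg (exp_nonneg _) (rpow_nonneg (mem_Ioi.1 hx).le _))).symm

theorem lintegral_exp_neg_mul_ofReal_sub (h : ℝ) :
    ∫⁻ r, .ofReal (exp (-r)) * .ofReal (r - h) = ENNReal.ofReal (exp (-h)) := by
  have hsupport : support (fun r ↦ ENNReal.ofReal (exp (-r)) * .ofReal r) ⊆ Ioi 0 :=
    support_subset_iff'.2 fun r hr ↦ by rw [ENNReal.ofReal_of_nonpos (not_lt.1 hr), mul_zero]
  calc ∫⁻ r, .ofReal (exp (-r)) * .ofReal (r - h)
      = ∫⁻ r, ENNReal.ofReal (exp (-h)) * (.ofReal (exp (-r)) * .ofReal r) := by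
        rw [← lintegral_add_right_eq_self _ h]
        refine lintegral_congr fun r ↦ ?_
        rw [add_sub_cancel_right, neg_add_rev, exp_add, ENNReal.ofReal_mul (exp_nonneg _),
          mul_assoc]
    _ = ENNReal.ofReal (exp (-h)) * ∫⁻ r in Ioi 0, .ofReal (exp (-r) * r ^ ((2 : ℝ) - 1)) := by
        rw [lintegral_const_mul' _ _ ENNReal.ofReal_ne_top,
          ← setLIntegral_eq_of_support_subset hsupport]
        congr! 3 with r
        rw [ENNReal.ofReal_mul (exp_nonneg _)]
        norm_num
    _ = ENNReal.ofReal (exp (-h)) := by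
        rw [lintegral_exp_neg_mul_rpow two_pos, Gamma_two, ENNReal.ofReal_one, mul_one]

theorem ofReal_mul_lintegral_le_exp_neg (hP : Monotone P) (hPI : ∀ x, P x ∈ Icc (0 : ℝ) 1)
    (hδ : Measurable δ) (hm : 0 ≤ m)
    (hΔ : ∀ x, m * Δ x ≤ ∫ r, expBump r * (P (x + δ r) - P (x + δ r - (r - h)))) :
    .ofReal m * ∫⁻ x, .ofReal (Δ x) ≤ ENNReal.ofReal (exp (-h)) := by
  have hmeas : Measurable fun q : ℝ × ℝ ↦
      ENNReal.ofReal (expBump q.2 * (P (q.1 + δ q.2) - P (q.1 + δ q.2 - (q.2 - h)))) := by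
    have hbump := contDiff_expBump.continuous.measurable
    have hPmeas := hP.measurable
    fun_prop
  calc .ofReal m * ∫⁻ x, .ofReal (Δ x)
      = ∫⁻ x, .ofReal (m * Δ x) := by
        simp only [ENNReal.ofReal_mul hm, lintegral_const_mul' _ _ ENNReal.ofReal_ne_top]
    _ ≤ ∫⁻ x, ∫⁻ r, .ofReal (expBump r * (P (x + δ r) - P (x + δ r - (r - h)))) :=
        lintegral_mono fun x ↦ (ENNReal.ofReal_le_ofReal (hΔ x)).trans
          (ofReal_integral_le_lintegral _)
    _ = ∫⁻ r, ∫⁻ x, .ofReal (expBump r * (P (x + δ r) - P (x + δ r - (r - h)))) :=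
        lintegral_lintegral_swap hmeas.aemeasurable
    _ = ∫⁻ r, .ofReal (expBump r) * ∫⁻ x, .ofReal (P x - P (x - (r - h))) := by
        refine lintegral_congr fun r ↦ ?_
        simp only [ENNReal.ofReal_mul (expBump_nonneg r),
          lintegral_const_mul' _ _ ENNReal.ofReal_ne_top]
        rw [lintegral_add_right_eq_self (fun x ↦ ENNReal.ofReal (P x - P (x - (r - h))))]
    _ ≤ ∫⁻ r, .ofReal (exp (-r)) * .ofReal (r - h) := by
        gcongr with r
        · exact expBump_le_exp_neg r
        · simpa using lintegral_sub_shift_le hP hPI (r - h)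
    _ = ENNReal.ofReal (exp (-h)) := lintegral_exp_neg_mul_ofReal_sub h

theorem integrable_expBump_mul (hF : Measurable F) (hFI : ∀ x, F x ∈ Icc (0 : ℝ) 1) :
    Integrable fun r ↦ expBump r * F r :=
  integrable_expBump.mul_bdd hF.aestronglyMeasurable
    (ae_of_all _ fun r ↦ by rw [norm_of_nonneg (hFI r).1]; exact (hFI r).2)

theorem expBump_mul_comp_sub_le (hF : Monotone F) (r x : ℝ) :
    expBump r * F (x - r) ≤ expBump r * F x := by
  rcases le_total r 0 with hr | hr
  · simp only [expBump_of_nonpos hr, zero_mul, le_refl]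
  · exact mul_le_mul_of_nonneg_left (hF (sub_le_self x hr)) (expBump_nonneg r)

variable (hF : Monotone F) (hFI : ∀ x, F x ∈ Icc (0 : ℝ) 1) (hG : Monotone G)
  (hGI : ∀ x, G x ∈ Icc (0 : ℝ) 1)

include hF hFI hG hGI

theorem lintegral_sub_le_of_integral_expBump_sub_le
    (hFG : ∀ c, ∫ r, expBump r * F (c - r) ≤ ∫ r, expBump r * G (c + d - r)) (h : ℝ) :
    .ofReal (∫ r, expBump r) * ∫⁻ x, .ofReal (F x - G (x + d + h)) ≤
      ENNReal.ofReal (exp (-h)) := by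
  refine ofReal_mul_lintegral_le_exp_neg hF hFI (δ := fun _ ↦ 0) measurable_const
    integral_expBump_pos.le fun x ↦ ?_
  have hintF := integrable_expBump_mul (F := fun r ↦ F (x + h - r))
    (hF.measurable.comp (by fun_prop)) fun r ↦ hFI _
  have hintG := integrable_expBump_mul (F := fun r ↦ G (x + h + d - r))
    (hG.measurable.comp (by fun_prop)) fun r ↦ hGI _
  have hle : ∫ r, expBump r * F (x + h - r) ≤ ∫ r, expBump r * G (x + d + h) :=
    (hFG (x + h)).trans (integral_mono hintG (integrable_expBump.mul_const _)
      fun r ↦ (expBump_mul_comp_sub_le hG r _).trans_eq (by ring_nf))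
  have hsplit : ∫ r, expBump r * (F (x + 0) - F (x + 0 - (r - h))) =
      (∫ r, expBump r * F x) - ∫ r, expBump r * F (x + h - r) := by
    rw [← integral_sub (integrable_expBump.mul_const _) hintF]
    refine integral_congr_ae (ae_of_all _ fun r ↦ ?_)
    ring_nf
  rw [hsplit]
  rw [integral_mul_const] at hle ⊢
  linarith

theorem lintegral_sub_le_of_integral_expBump_add_le
    (hFG : ∀ c, ∫ r, expBump r * F (c + r) ≤ ∫ r, expBump r * G (c + d + r)) (h : ℝ) :
    .ofReal (∫ r, expBump r) * ∫⁻ x, .ofReal (F x - G (x + d + h)) ≤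
      ENNReal.ofReal (exp (-h)) := by
  refine ofReal_mul_lintegral_le_exp_neg hG hGI (δ := fun r ↦ d + r) (by fun_prop)
    integral_expBump_pos.le fun x ↦ ?_
  have hintF := integrable_expBump_mul (F := fun r ↦ F (x + r))
    (hF.measurable.comp (by fun_prop)) fun r ↦ hFI _
  have hintG := integrable_expBump_mul (F := fun r ↦ G (x + d + r))
    (hG.measurable.comp (by fun_prop)) fun r ↦ hGI _
  have hle : ∫ r, expBump r * F x ≤ ∫ r, expBump r * G (x + d + r) :=
    (integral_mono (integrable_expBump.mul_const _) hintF fun r ↦ by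
      simpa using expBump_mul_comp_sub_le hF r (x + r)).trans (hFG x)
  have hsplit : ∫ r, expBump r * (G (x + (d + r)) - G (x + (d + r) - (r - h))) =
      (∫ r, expBump r * G (x + d + r)) - ∫ r, expBump r * G (x + d + h) := by
    rw [← integral_sub hintG (integrable_expBump.mul_const _)]
    refine integral_congr_ae (ae_of_all _ fun r ↦ ?_)
    ring_nf
  rw [hsplit]
  rw [integral_mul_const] at hle ⊢
  linarith

end Comparison

section Quantile

theorem lintegral_pinv_sub_le (μ ν : Measure ℝ) [IsProbabilityMeasure μ] [IsProbabilityMeasure ν]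
    (h : ℝ) :
    ∫⁻ u in Ioo 0 1, .ofReal (pinv (cdfOf ν) u - h - pinv (cdfOf μ) u) ≤
      ∫⁻ x, .ofReal (cdfOf μ x - cdfOf ν (x + h)) := by
  have hμ : Measurable (cdfOf μ) := (monotone_cdfOf μ).measurable
  have hν : Measurable (cdfOf ν) := (monotone_cdfOf ν).measurable
  -- `S` is the region between the two graphs; slicing it in either direction gives the two sides.
  let S : Set (ℝ × ℝ) := {q | cdfOf ν (q.2 + h) ≤ q.1 ∧ q.1 ≤ cdfOf μ q.2}
  have hS : MeasurableSet S :=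
    (measurableSet_le (by fun_prop) measurable_fst).inter
      (measurableSet_le measurable_fst (by fun_prop))
  calc ∫⁻ u in Ioo 0 1, .ofReal (pinv (cdfOf ν) u - h - pinv (cdfOf μ) u)
      = ∫⁻ u in Ioo 0 1, volume (Ioo (pinv (cdfOf μ) u) (pinv (cdfOf ν) u - h)) := by
        simp only [Real.volume_Ioo]
    _ ≤ ∫⁻ u in Ioo 0 1, volume (Prod.mk u ⁻¹' S) :=
        setLIntegral_mono' measurableSet_Ioo fun u hu ↦ measure_mono fun x hx ↦
          ⟨cdfOf_le_of_lt_pinv ν hu.1 (lt_sub_iff_add_lt.1 hx.2),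
            le_cdfOf_of_pinv_lt μ hu.2 hx.1⟩
    _ = ∫⁻ x, volume.restrict (Ioo 0 1) ((fun u ↦ (u, x)) ⁻¹' S) := by
        rw [← Measure.prod_apply hS, Measure.prod_apply_symm hS]
    _ ≤ ∫⁻ x, volume (Icc (cdfOf ν (x + h)) (cdfOf μ x)) :=
        lintegral_mono fun x ↦ Measure.restrict_apply_le _ _
    _ = ∫⁻ x, .ofReal (cdfOf μ x - cdfOf ν (x + h)) := by simp only [Real.volume_Icc]

theorem lintegral_pinv_sub_le_exp_neg {μ ν : Measure ℝ} [IsProbabilityMeasure μ]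
    [IsProbabilityMeasure ν] {m d : ℝ} (hm : 0 < m)
    (hμν : ∀ h, .ofReal m * ∫⁻ x, .ofReal (cdfOf μ x - cdfOf ν (x + d + h)) ≤
      ENNReal.ofReal (Real.exp (-h))) (h : ℝ) :
    ∫⁻ u in Ioo 0 1, .ofReal (pinv (cdfOf ν) u - pinv (cdfOf μ) u - h) ≤
      .ofReal (Real.exp d / m) * .ofReal (Real.exp (-h)) :=
  calc ∫⁻ u in Ioo 0 1, .ofReal (pinv (cdfOf ν) u - pinv (cdfOf μ) u - h)
      ≤ ∫⁻ x, .ofReal (cdfOf μ x - cdfOf ν (x + d + (h - d))) := by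
        simpa only [sub_right_comm _ h, add_add_sub_cancel, add_assoc, add_sub_cancel]
          using lintegral_pinv_sub_le μ ν h
    _ ≤ .ofReal (Real.exp (-(h - d))) / .ofReal m := by
        rw [ENNReal.le_div_iff_mul_le (.inl (ENNReal.ofReal_pos.2 hm).ne')
          (.inl ENNReal.ofReal_ne_top), mul_comm]
        exact hμν (h - d)
    _ = .ofReal (Real.exp d / m) * .ofReal (Real.exp (-h)) := by
        rw [← ENNReal.ofReal_div_of_pos hm, ← ENNReal.ofReal_mul (by positivity), neg_sub,
          sub_eq_add_neg, Real.exp_add, mul_div_right_comm]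

theorem Wdist_eq_eLpNorm {p : ℝ} (hp : 0 < p) (F G : ℝ → ℝ) :
    Wdist p F G = eLpNorm (pinv F - pinv G) (.ofReal p) (volume.restrict (Ioo 0 1)) := by
  rw [eLpNorm_eq_lintegral_rpow_enorm_toReal (ENNReal.ofReal_pos.2 hp).ne' ENNReal.ofReal_ne_top,
    ENNReal.toReal_ofReal hp.le, Wdist]
  simp only [Pi.sub_apply, Real.enorm_eq_ofReal_abs, ENNReal.ofReal_rpow_of_nonneg (abs_nonneg _)
    hp.le]

theorem Wdist_cdfOf_eq_top_iff {p : ℝ} (hp : 0 < p) (μ ν : Measure ℝ) [IsProbabilityMeasure μ]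
    [IsProbabilityMeasure ν] :
    Wdist p (cdfOf μ) (cdfOf ν) = ⊤ ↔
      ¬MemLp (pinv (cdfOf μ) - pinv (cdfOf ν)) (.ofReal p) (volume.restrict (Ioo 0 1)) := by
  have hmeas := (aemeasurable_pinv_cdfOf μ).sub (aemeasurable_pinv_cdfOf ν)
  rw [Wdist_eq_eLpNorm hp, MemLp, and_iff_right hmeas.aestronglyMeasurable, lt_top_iff_ne_top,
    not_not]

end Quantile

section ExponentialTail

variable {α : Type*} [MeasurableSpace α] {μ : Measure α} {f : α → ℝ} {C : ℝ≥0∞}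

theorem lintegral_ofReal_abs_sub_le (hf : AEMeasurable f μ) (h : ℝ) :
    ∫⁻ x, .ofReal (|f x| - h) ∂μ ≤ ∫⁻ x, .ofReal (f x - h) ∂μ + ∫⁻ x, .ofReal (-f x - h) ∂μ := by
  rw [← lintegral_add_left' (by fun_prop)]
  refine lintegral_mono fun x ↦ ?_
  rw [abs_eq_max_neg, ← max_sub_sub_right, ENNReal.ofReal_max]
  exact max_le_add_of_nonneg zero_le zero_le

theorem measure_lt_le_of_lintegral_sub_le_exp_neg (hf : AEMeasurable f μ)
    (hfC : ∀ h, ∫⁻ x, .ofReal (f x - h) ∂μ ≤ C * .ofReal (Real.exp (-h))) (h : ℝ) :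
    μ {x | h < f x} ≤ C * .ofReal (Real.exp 1) * .ofReal (Real.exp (-h)) :=
  calc μ {x | h < f x}
      ≤ ∫⁻ x, .ofReal (f x - (h - 1)) ∂μ :=
        meas_le_lintegral₀ (by fun_prop) fun x (hx : h < f x) ↦
          ENNReal.one_le_ofReal.2 (by linarith)
    _ ≤ C * .ofReal (Real.exp (-(h - 1))) := hfC (h - 1)
    _ = C * .ofReal (Real.exp 1) * .ofReal (Real.exp (-h)) := by
        rw [mul_assoc, ← ENNReal.ofReal_mul (Real.exp_nonneg _), ← Real.exp_add, neg_sub,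
          sub_eq_add_neg]

theorem memLp_of_lintegral_abs_sub_le_exp_neg {p : ℝ} (hp : 0 < p) (hC : C ≠ ⊤)
    (hf : AEMeasurable f μ)
    (hfC : ∀ h, ∫⁻ x, .ofReal (|f x| - h) ∂μ ≤ C * .ofReal (Real.exp (-h))) :
    MemLp f (.ofReal p) μ := by
  have htail := measure_lt_le_of_lintegral_sub_le_exp_neg hf.abs hfC
  refine ⟨hf.aestronglyMeasurable, (eLpNorm_lt_top_iff_lintegral_rpow_enorm_lt_top
    (ENNReal.ofReal_pos.2 hp).ne' ENNReal.ofReal_ne_top).2 ?_⟩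
  calc ∫⁻ x, ‖f x‖ₑ ^ (ENNReal.ofReal p).toReal ∂μ
      = ∫⁻ x, .ofReal (|f x| ^ p) ∂μ := by
        simp only [ENNReal.toReal_ofReal hp.le, Real.enorm_eq_ofReal_abs,
          ENNReal.ofReal_rpow_of_nonneg (abs_nonneg _) hp.le]
    _ = .ofReal p * ∫⁻ t in Ioi 0, μ {x | t < |f x|} * .ofReal (t ^ (p - 1)) :=
        lintegral_rpow_eq_lintegral_meas_lt_mul μ (ae_of_all _ fun x ↦ abs_nonneg (f x)) hf.abs hp
    _ ≤ .ofReal p * ∫⁻ t in Ioi 0,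
          C * .ofReal (Real.exp 1) * .ofReal (Real.exp (-t) * t ^ (p - 1)) := by
        simp only [ENNReal.ofReal_mul (Real.exp_nonneg _), ← mul_assoc]
        gcongr with t
        exact htail t
    _ = .ofReal p * (C * .ofReal (Real.exp 1) * .ofReal (Real.Gamma p)) := by
        rw [lintegral_const_mul' _ _ (ENNReal.mul_ne_top hC ENNReal.ofReal_ne_top),
          lintegral_exp_neg_mul_rpow hp]
    _ < ⊤ := by finiteness

end ExponentialTail

section Displacement

open ProbabilityTheory

variable {A B : ℝ → ℝ} {κ η : Kernel ℝ ℝ} [IsMarkovKernel κ] [IsMarkovKernel η]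
  {μ ν : Measure ℝ} [IsProbabilityMeasure μ] [IsProbabilityMeasure ν] {p s t : ℝ}

theorem isMonotoneFlow_cdfOf_kernel (κ : Kernel ℝ ℝ) [IsMarkovKernel κ] :
    IsMonotoneFlow fun s ↦ cdfOf (κ s) where
  measurable := measurable_cdfOf_kernel κ
  monotone s := monotone_cdfOf (κ s)
  mem_Icc s := cdfOf_mem_Icc (κ s)

theorem IsWeakSolution.memLp_pinv_sub {L L' : NNReal} (hp : 0 < p)
    (hF : IsWeakSolution A B (cdfOf μ) fun s ↦ cdfOf (κ s)) (hA : MonotoneOn A (Icc 0 1))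
    (hAL : LipschitzOnWith L A (Icc 0 1)) (hBL : LipschitzOnWith L' B (Icc 0 1)) (ht : 0 ≤ t) :
    MemLp (pinv (cdfOf (κ t)) - pinv (cdfOf μ)) (.ofReal p) (volume.restrict (Ioo 0 1)) := by
  obtain ⟨K, hK⟩ := exists_monotoneOn_speed hAL hBL
  have haverage (σ : ℝ) (hσ : σ * σ = 1) := hF.integral_expBump_le hσ hA hAL.continuousOn
    hBL.continuousOn (hK σ hσ) (isMonotoneFlow_cdfOf_kernel κ) (monotone_cdfOf μ).measurable
    (cdfOf_mem_Icc μ) ht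
  have hupper := lintegral_pinv_sub_le_exp_neg integral_expBump_pos <|
    lintegral_sub_le_of_integral_expBump_sub_le (monotone_cdfOf μ) (cdfOf_mem_Icc μ)
      (monotone_cdfOf (κ t)) (cdfOf_mem_Icc (κ t)) (d := K * t)
      fun c ↦ by simpa using haverage 1 (one_mul 1) c
  have hlower := lintegral_pinv_sub_le_exp_neg integral_expBump_pos <|
    lintegral_sub_le_of_integral_expBump_add_le (monotone_cdfOf (κ t)) (cdfOf_mem_Icc (κ t))
      (monotone_cdfOf μ) (cdfOf_mem_Icc μ) (d := K * t)
      fun c ↦ by simpa using haverage (-1) (by norm_num) (c + K * t)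
  have hmeas := (aemeasurable_pinv_cdfOf (κ t)).sub (aemeasurable_pinv_cdfOf μ)
  refine memLp_of_lintegral_abs_sub_le_exp_neg hp
    (C := 2 * .ofReal (Real.exp (K * t) / ∫ r, expBump r)) (by finiteness) hmeas fun h ↦ ?_
  rw [two_mul, add_mul]
  refine (lintegral_ofReal_abs_sub_le hmeas h).trans (add_le_add (hupper h) ?_)
  simpa only [Pi.sub_apply, neg_sub] using hlower h

theorem wasserstein_flow_infinite_general {A' B' : ℝ → ℝ} {L₁ L₂ L₃ L₄ : NNReal}
    (hA : MonotoneOn A (Icc 0 1)) (hAL : LipschitzOnWith L₁ A (Icc 0 1))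
    (hBL : LipschitzOnWith L₂ B (Icc 0 1))
    (hA' : MonotoneOn A' (Icc 0 1)) (hAL' : LipschitzOnWith L₃ A' (Icc 0 1))
    (hBL' : LipschitzOnWith L₄ B' (Icc 0 1))
    (hF : IsWeakSolution A B (cdfOf μ) fun s ↦ cdfOf (κ s))
    (hG : IsWeakSolution A' B' (cdfOf ν) fun s ↦ cdfOf (η s))
    (hp : 0 < p) (hs : 0 ≤ s) (ht : 0 ≤ t) :
    Wdist p (cdfOf (κ s)) (cdfOf (η t)) = ⊤ ↔ Wdist p (cdfOf μ) (cdfOf ν) = ⊤ := by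
  have hdiff := (hF.memLp_pinv_sub hp hA hAL hBL hs).sub (hG.memLp_pinv_sub hp hA' hAL' hBL' ht)
  rw [sub_sub_sub_comm] at hdiff
  rw [Wdist_cdfOf_eq_top_iff hp, Wdist_cdfOf_eq_top_iff hp, not_iff_not]
  exact ⟨fun h ↦ by simpa using h.sub hdiff, fun h ↦ by simpa using hdiff.add h⟩

end Displacement

/-- Under (D1), for initial conditions with finite first moments and infinite
`W_p` distance, `W_p(F_t, G_t) = ∞` for all `t ≥ 0`. -/
theorem wasserstein_flow_infinite
    (a b : ℝ → ℝ)
    (ha : ContinuousOn a (Set.Icc 0 1)) (hb : ContinuousOn b (Set.Icc 0 1))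
    (ha0 : ∀ u ∈ Set.Icc (0:ℝ) 1, 0 ≤ a u)
    (hD1 : StrictMonoOn (primitive a) (Set.Icc 0 1))
    (μ ν : Measure ℝ) [IsProbabilityMeasure μ] [IsProbabilityMeasure ν]
    (hμ : Integrable (fun x => |x|) μ) (hν : Integrable (fun x => |x|) ν)
    (F G : ℝ → ℝ → ℝ)
    (hF : IsWeakSolution (primitive a) (primitive b) (cdfOf μ) F) (hFmem : MemF F)
    (hG : IsWeakSolution (primitive a) (primitive b) (cdfOf ν) G) (hGmem : MemF G)
    (p : ℝ) (hp : 1 ≤ p)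
    (hW : Wdist p (cdfOf μ) (cdfOf ν) = ⊤) :
    ∀ t : ℝ, 0 ≤ t → Wdist p (F t) (G t) = ⊤ := by
  obtain ⟨L, hL⟩ := exists_lipschitzOnWith_primitive ha
  obtain ⟨L', hL'⟩ := exists_lipschitzOnWith_primitive hb
  obtain ⟨κ, _, hκ⟩ := hFmem.exists_kernel
  obtain ⟨η, _, hη⟩ := hGmem.exists_kernel
  intro t ht
  rw [hκ t ht, hη t ht]
  exact (wasserstein_flow_infinite_general hD1.monotoneOn hL hL' hD1.monotoneOn hL hL'
    (hF.congr hκ) (hG.congr hη) (zero_lt_one.trans_le hp) ht ht).2 hW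
end
end

section
/- Let n ≥ 1, p ≥ 1, and let (x₁,…,x_n) and (x'₁,…,x'_n) be vectors in ℝⁿ with respective increasing reorderings (y₁,…,y_n) and (y'₁,…,y'_n). Then Σ_{i=1}^n |y_i − y'_i|^p ≤ Σ_{i=1}^n |x_i − x'_i|^p. -/
open scoped BigOperators

noncomputable section

/-!
If a permutation `σ` is not the identity, let `a` be the largest point it moves. Uncrossing the two
pairs `(a, σ a)` and `(σ⁻¹ a, a)` into `(a, a)` and `(σ⁻¹ a, σ a)` moves fewer points, and for costs
of the form `f (u - v)` with `f` convex it does not increase the total: the two new differences have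
the same sum as the two old ones and lie between them. Iterating, the identity pairing of two
increasing vectors is optimal.
-/

open Equiv Set

section Monge

variable {ι α β M : Type*}

/-- A cost function has the *Monge property* if matching two points of `α` with two points of `β`
in increasing order is never more expensive than matching them crosswise. On a product of two
chains this is submodularity. -/
def IsMonge [Preorder α] [Preorder β] [Add M] [LE M] (c : α → β → M) : Prop :=
  ∀ ⦃a a'⦄, a ≤ a' → ∀ ⦃b b'⦄, b ≤ b' → c a b + c a' b' ≤ c a b' + c a' b

variable [AddCommMonoid M] [PartialOrder M] [IsOrderedAddMonoid M] [Fintype ι]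
  {c : α → β → M} {f : ι → α} {g : ι → β}

theorem IsMonge.sum_swap_mul_le_sum [Preorder α] [Preorder β] [DecidableEq ι] (hc : IsMonge c)
    {σ : Perm ι} {a b : ι} (hba : σ b = a) (hf : f b ≤ f a) (hg : g (σ a) ≤ g a) :
    ∑ i, c (f i) (g ((swap a (σ a) * σ) i)) ≤ ∑ i, c (f i) (g (σ i)) := by
  obtain rfl | hne := eq_or_ne b a
  · simp [hba]
  rw [← Finset.sum_add_sum_compl {b, a},
    ← Finset.sum_add_sum_compl {b, a} fun i ↦ c (f i) (g (σ i)), Finset.sum_pair hne,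
    Finset.sum_pair hne]
  refine add_le_add ?_ (Finset.sum_le_sum fun i hi ↦ ?_)
  · simpa [hba] using hc hf hg
  · obtain ⟨hib, hia⟩ : i ≠ b ∧ i ≠ a := by simpa using hi
    have hσi : σ i ≠ a := hba ▸ σ.injective.ne hib
    rw [Perm.mul_apply, swap_apply_of_ne_of_ne hσi (σ.injective.ne hia)]

theorem IsMonge.sum_le_sum_comp_perm [LinearOrder α] [LinearOrder β] (hc : IsMonge c)
    (hfg : Monovary f g) (σ : Perm ι) : ∑ i, c (f i) (g i) ≤ ∑ i, c (f i) (g (σ i)) := by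
  classical
  induction hn : σ.support.card using Nat.strong_induction_on generalizing σ with
  | h n ih =>
    obtain rfl | hσ := eq_or_ne σ 1
    · rfl
    -- Ties in `g` are broken by `f`, so that `a` maximizes both functions on the support.
    obtain ⟨a, ha, hmax⟩ := σ.support.exists_max_image (fun i ↦ toLex (g i, f i))
      (Finset.nonempty_iff_ne_empty.2 (Perm.support_eq_empty_iff.not.2 hσ))
    have hg : ∀ i ∈ σ.support, g i ≤ g a := fun i hi ↦ Prod.Lex.monotone_fst _ _ (hmax i hi)
    have hf : ∀ i ∈ σ.support, f i ≤ f a := fun i hi ↦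
      (Prod.Lex.toLex_le_toLex.1 (hmax i hi)).elim (fun h ↦ hfg h) fun h ↦ h.2
    obtain ⟨b, hba⟩ := σ.surjective a
    have hb : b ∈ σ.support := Perm.apply_mem_support.1 (hba ▸ ha)
    calc ∑ i, c (f i) (g i)
        ≤ ∑ i, c (f i) (g ((swap a (σ a) * σ) i)) :=
          ih _ (hn ▸ Perm.card_support_swap_mul (Perm.mem_support.1 ha)) _ rfl
      _ ≤ ∑ i, c (f i) (g (σ i)) :=
          hc.sum_swap_mul_le_sum hba (hf b hb) (hg _ (Perm.apply_mem_support.2 ha))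

end Monge

section Convex

theorem add_le_add_of_convexOn_of_mem_segment {𝕜 E M : Type*} [Semiring 𝕜] [PartialOrder 𝕜]
    [AddCommGroup E] [Module 𝕜 E] [AddCommMonoid M] [PartialOrder M] [IsOrderedAddMonoid M]
    [Module 𝕜 M] {s : Set E} {f : E → M} (hf : ConvexOn 𝕜 s f) {a b c d : E} (ha : a ∈ s)
    (hd : d ∈ s) (hb : b ∈ segment 𝕜 a d) (h : b + c = a + d) : f b + f c ≤ f a + f d := by
  obtain ⟨l, m, hl, hm, hlm, rfl⟩ := hb
  have hc : c = m • a + l • d := by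
    refine add_left_cancel (h.trans ?_)
    rw [add_add_add_comm, ← add_smul, ← add_smul, add_comm m l, hlm, one_smul, one_smul]
  calc f (l • a + m • d) + f c
      ≤ (l • f a + m • f d) + (m • f a + l • f d) :=
        add_le_add (hf.2 ha hd hl hm hlm) (hc ▸ hf.2 ha hd hm hl (add_comm l m ▸ hlm))
    _ = f a + f d := by
        rw [add_add_add_comm, ← add_smul, ← add_smul, add_comm m l, hlm, one_smul, one_smul]

theorem isMonge_comp_sub {𝕜 M : Type*} [Field 𝕜] [LinearOrder 𝕜] [IsStrictOrderedRing 𝕜]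
    [AddCommMonoid M] [PartialOrder M] [IsOrderedAddMonoid M] [Module 𝕜 M] {f : 𝕜 → M}
    (hf : ConvexOn 𝕜 univ f) : IsMonge fun a b ↦ f (a - b) := by
  intro a a' ha b b' hb
  have hmem : a - b ∈ segment 𝕜 (a - b') (a' - b) := by
    rw [segment_eq_Icc (sub_le_sub ha hb)]
    exact ⟨sub_le_sub_left hb a, sub_le_sub_right ha b⟩
  exact add_le_add_of_convexOn_of_mem_segment hf (mem_univ _) (mem_univ _) hmem (by ring)

theorem convexOn_rpow_comp {E : Type*} [AddCommMonoid E] [Module ℝ E] {s : Set E} {f : E → ℝ}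
    (hf : ConvexOn ℝ s f) (hf₀ : ∀ ⦃x⦄, x ∈ s → 0 ≤ f x) {p : ℝ} (hp : 1 ≤ p) :
    ConvexOn ℝ s fun x ↦ f x ^ p := by
  refine ⟨hf.1, fun x hx y hy a b ha hb hab ↦ ?_⟩
  calc f (a • x + b • y) ^ p
      ≤ (a • f x + b • f y) ^ p :=
        Real.rpow_le_rpow (hf₀ (hf.1 hx hy ha hb hab)) (hf.2 hx hy ha hb hab)
          (zero_le_one.trans hp)
    _ ≤ a • f x ^ p + b • f y ^ p := (convexOn_rpow hp).2 (hf₀ hx) (hf₀ hy) ha hb hab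

theorem isMonge_abs_sub_rpow {p : ℝ} (hp : 1 ≤ p) : IsMonge fun a b : ℝ ↦ |a - b| ^ p :=
  isMonge_comp_sub (convexOn_rpow_comp convexOn_univ_norm (fun x _ ↦ norm_nonneg x) hp)

end Convex

theorem increasing_reordering_contraction_general {ι α β M : Type*} [Fintype ι] [LinearOrder α]
    [LinearOrder β] [AddCommMonoid M] [PartialOrder M] [IsOrderedAddMonoid M] {c : α → β → M}
    (hc : IsMonge c) {x y : ι → α} {x' y' : ι → β} {σ σ' : Perm ι} (hy : y = x ∘ σ)
    (hy' : y' = x' ∘ σ') (hyy' : Monovary y y') :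
    ∑ i, c (y i) (y' i) ≤ ∑ i, c (x i) (x' i) := by
  calc ∑ i, c (y i) (y' i)
      ≤ ∑ i, c (y i) (y' ((σ'⁻¹ * σ) i)) := hc.sum_le_sum_comp_perm hyy' _
    _ = ∑ i, c (x (σ i)) (x' (σ i)) := by simp [hy, hy']
    _ = ∑ i, c (x i) (x' i) := Equiv.sum_comp σ fun i ↦ c (x i) (x' i)

/-- The increasing reordering contracts the `ℓ^p` distance: if `y` and `y'` are the
nondecreasing reorderings of `x` and `x'`, then `Σ |yᵢ - y'ᵢ|^p ≤ Σ |xᵢ - x'ᵢ|^p`. -/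
theorem increasing_reordering_contraction
    (n : ℕ) (hn : 1 ≤ n) (p : ℝ) (hp : 1 ≤ p)
    (x x' y y' : Fin n → ℝ)
    (σ : Equiv.Perm (Fin n)) (hy : y = x ∘ σ) (hymono : Monotone y)
    (σ' : Equiv.Perm (Fin n)) (hy' : y' = x' ∘ σ') (hy'mono : Monotone y') :
    ∑ i : Fin n, |y i - y' i| ^ p ≤ ∑ i : Fin n, |x i - x' i| ^ p :=
  increasing_reordering_contraction_general (isMonge_abs_sub_rpow hp) hy hy'
    (hymono.monovary hy'mono)
end
end

section
/- Assume the uniform ellipticity condition (D3) and the regularity condition (R1), and let F₀ be a cumulative distribution function with finite first moment. Let F be the unique weak solution in 𝓕 of the Cauchy problem with initial condition F₀. Assume moreover that F has classical regularity (F is C^{1,2} on (0,∞)×ℝ and solves the Cauchy problem pointwise there) and that for all 0 < t₁ < t₂ the function (t,x) ↦ ∂_x F_t(x) is bounded on [t₁,t₂]×ℝ. Then the pseudo-inverse function (t,u) ↦ F_t^{-1}(u) is C^{1,2} on (0,∞)×(0,1) and satisfies ∂_t F_t^{-1}(u) = b(u) − (1/2) ∂_u ( a(u) / ∂_u F_t^{-1}(u)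 ) there. -/
open MeasureTheory Set Filter Topology Function
open scoped ENNReal

noncomputable section

/-- Tail function `tl(f,x) = 1_{x ≥ 0} (1 - f(x)) + 1_{x ≤ 0} f(x)`. -/
def tl (f : ℝ → ℝ) (x : ℝ) : ℝ :=
  (if 0 ≤ x then 1 - f x else 0) + (if x ≤ 0 then f x else 0)

/-- `F` has the classical regularity: it is `C^{1,2}` on `(0,∞) × ℝ` and solves the
Cauchy problem `∂ₜ F = (1/2) ∂ₓₓ (A(F)) - ∂ₓ (B(F))` in the classical sense there. -/
def HasClassicalRegularity (a b : ℝ → ℝ) (F : ℝ → ℝ → ℝ) : Prop :=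
  ∃ Ft Fx Fxx : ℝ → ℝ → ℝ,
    (∀ t : ℝ, 0 < t → ∀ x : ℝ,
      HasDerivAt (fun s => F s x) (Ft t x) t ∧
      HasDerivAt (fun y => F t y) (Fx t x) x ∧
      HasDerivAt (fun y => Fx t y) (Fxx t x) x) ∧
    ContinuousOn (fun q : ℝ × ℝ => F q.1 q.2) (Set.Ioi 0 ×ˢ (Set.univ : Set ℝ)) ∧
    ContinuousOn (fun q : ℝ × ℝ => Ft q.1 q.2) (Set.Ioi 0 ×ˢ (Set.univ : Set ℝ)) ∧
    ContinuousOn (fun q : ℝ × ℝ => Fx q.1 q.2) (Set.Ioi 0 ×ˢ (Set.univ : Set ℝ)) ∧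
    ContinuousOn (fun q : ℝ × ℝ => Fxx q.1 q.2) (Set.Ioi 0 ×ˢ (Set.univ : Set ℝ)) ∧
    (∀ t : ℝ, 0 < t → ∀ x : ℝ,
      Ft t x = (1/2) * deriv (fun y => deriv (fun z => primitive a (F t z)) y) x
        - deriv (fun y => primitive b (F t y)) x)

/-!
The point is that `Fx := ∂ₓF` is positive for `t > 0`. As `a'` and `b` are only continuous, `Fx`
need not solve an equation in the classical sense, so the strong maximum principle is applied after
doubling the variables: `F t x - F t y` solves a linear parabolic equation in `(x, y)`, is
nonnegative for `y ≤ x` and vanishes on the diagonal. A Hopf barrier, positive on a disc that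
slides along the anti-diagonal away from a region where the difference is positive and touches the
diagonal at `(x₀, x₀)` at time `t₀`, stays below it, and its slope at `(x₀, x₀)` gives
`0 < Fx t₀ x₀`. Hence `F t` is strictly increasing, the implicit function theorem makes its inverse
`C^{1,2}`, and the equation for the inverse is the equation for `F` rewritten by the chain rule.
-/

/-- `f` is of class `C^{1,2}` on the space-time region `Ω`, with time derivative `ft` and space
derivatives `fx` and `fxx`. All derivatives are two-sided, also at boundary points of `Ω`. -/
structure HasC12On (f ft fx fxx : ℝ → ℝ → ℝ) (Ω : Set (ℝ × ℝ)) : Prop where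
  hasDerivAt_time : ∀ t x, (t, x) ∈ Ω → HasDerivAt (fun s => f s x) (ft t x) t
  hasDerivAt_space : ∀ t x, (t, x) ∈ Ω → HasDerivAt (f t) (fx t x) x
  hasDerivAt_space_space : ∀ t x, (t, x) ∈ Ω → HasDerivAt (fx t) (fxx t x) x
  continuousOn : ContinuousOn (uncurry f) Ω
  continuousOn_time : ContinuousOn (uncurry ft) Ω
  continuousOn_space : ContinuousOn (uncurry fx) Ω
  continuousOn_space_space : ContinuousOn (uncurry fxx) Ω

theorem HasC12On.mono {f ft fx fxx : ℝ → ℝ → ℝ} {Ω Ω' : Set (ℝ × ℝ)}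
    (hf : HasC12On f ft fx fxx Ω) (h : Ω' ⊆ Ω) : HasC12On f ft fx fxx Ω' where
  hasDerivAt_time t x hx := hf.hasDerivAt_time t x (h hx)
  hasDerivAt_space t x hx := hf.hasDerivAt_space t x (h hx)
  hasDerivAt_space_space t x hx := hf.hasDerivAt_space_space t x (h hx)
  continuousOn := hf.continuousOn.mono h
  continuousOn_time := hf.continuousOn_time.mono h
  continuousOn_space := hf.continuousOn_space.mono h
  continuousOn_space_space := hf.continuousOn_space_space.mono h

section MinimumPrinciple

theorem deriv_deriv_nonneg_of_isLocalMin {f : ℝ → ℝ} {x : ℝ} (hmin : IsLocalMin f x)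
    (hf : ContinuousAt f x) : 0 ≤ deriv (deriv f) x := by
  by_contra! hneg
  have hmax : IsLocalMax f x := isLocalMax_of_deriv_deriv_neg hneg hmin.deriv_eq_zero hf
  have hconst : f =ᶠ[𝓝 x] fun _ => f x := by
    filter_upwards [hmin, hmax] with y h₁ h₂ using le_antisymm h₂ h₁
  have hzero : deriv (deriv f) x = 0 := by simpa using hconst.deriv.deriv_eq
  exact hneg.ne hzero

theorem deriv_nonpos_of_isLocalMinOn_Iic {f : ℝ → ℝ} {t : ℝ} (hmin : IsLocalMinOn f (Iic t) t) :
    deriv f t ≤ 0 := by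
  by_cases hf : DifferentiableAt ℝ f t
  · have hcone : -1 ∈ posTangentConeAt (Iic t) t :=
      mem_posTangentConeAt_of_segment_subset
        ((convex_Iic t).segment_subset self_mem_Iic (by simp))
    simpa using hmin.hasFDerivWithinAt_nonneg hf.hasDerivAt.hasFDerivAt.hasFDerivWithinAt hcone
  · exact (deriv_zero_of_not_differentiableAt hf).le

/-- `Ω ∈ 𝓝[Iic t ×ˢ univ] (t, x, y)` says that `(t, x, y)` lies in the parabolic interior of
`Ω`. -/
theorem nonneg_of_strict_supersolution {Ω : Set (ℝ × ℝ × ℝ)} {V α₁ α₂ β₁ β₂ : ℝ → ℝ → ℝ → ℝ}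
    (hΩ : IsCompact Ω) (hV : ContinuousOn (fun z : ℝ × ℝ × ℝ => V z.1 z.2.1 z.2.2) Ω)
    (hα₁ : ∀ t x y, (t, x, y) ∈ Ω → 0 ≤ α₁ t x y) (hα₂ : ∀ t x y, (t, x, y) ∈ Ω → 0 ≤ α₂ t x y)
    (hint : ∀ t x y, (t, x, y) ∈ Ω → V t x y < 0 → Ω ∈ 𝓝[Iic t ×ˢ univ] (t, x, y))
    (hpde : ∀ t x y, (t, x, y) ∈ Ω →
      α₁ t x y * deriv (deriv fun x' => V t x' y) x + α₂ t x y * deriv (deriv (V t x)) y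
        + β₁ t x y * deriv (fun x' => V t x' y) x + β₂ t x y * deriv (V t x) y
          < deriv (fun s => V s x y) t) :
    ∀ t x y, (t, x, y) ∈ Ω → 0 ≤ V t x y := by
  by_contra! ⟨t', x', y', hz', hneg'⟩
  obtain ⟨⟨t, x, y⟩, hz, hmin⟩ := hΩ.exists_isMinOn ⟨_, hz'⟩ hV
  have hnhds := hint t x y hz ((hmin hz').trans_lt hneg')
  have hlocal : IsLocalMinOn (fun z : ℝ × ℝ × ℝ => V z.1 z.2.1 z.2.2) (Iic t ×ˢ univ) (t, x, y) :=
    hmin.filter_mono (le_principal_iff.2 hnhds)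
  have hcont : ContinuousWithinAt (fun z : ℝ × ℝ × ℝ => V z.1 z.2.1 z.2.2) (Iic t ×ˢ univ)
      (t, x, y) := (hV _ hz).mono_of_mem_nhdsWithin hnhds
  have hmin_t : IsLocalMinOn (fun s => V s x y) (Iic t) t :=
    hlocal.comp_continuousOn (g := fun s => (s, x, y)) (fun s hs => ⟨hs, mem_univ _⟩)
      (by fun_prop) self_mem_Iic
  have hmin_x : IsLocalMin (fun x' => V t x' y) x := isLocalMinOn_univ_iff.1 <|
    hlocal.comp_continuousOn (g := fun x' => (t, x', y)) (fun _ _ => ⟨self_mem_Iic, mem_univ _⟩)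
      (by fun_prop) (mem_univ x)
  have hmin_y : IsLocalMin (V t x) y := isLocalMinOn_univ_iff.1 <|
    hlocal.comp_continuousOn (g := fun y' => (t, x, y')) (fun _ _ => ⟨self_mem_Iic, mem_univ _⟩)
      (by fun_prop) (mem_univ y)
  have hcont_x : ContinuousAt (fun x' => V t x' y) x := continuousWithinAt_univ _ _ |>.1 <|
    hcont.comp (f := fun x' => (t, x', y)) (by fun_prop) fun _ _ => ⟨self_mem_Iic, mem_univ _⟩
  have hcont_y : ContinuousAt (V t x) y := continuousWithinAt_univ _ _ |>.1 <|
    hcont.comp (f := fun y' => (t, x, y')) (by fun_prop) fun _ _ => ⟨self_mem_Iic, mem_univ _⟩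
  have hlt := hpde t x y hz
  rw [hmin_x.deriv_eq_zero, hmin_y.deriv_eq_zero] at hlt
  have hxx := mul_nonneg (hα₁ t x y hz) (deriv_deriv_nonneg_of_isLocalMin hmin_x hcont_x)
  have hyy := mul_nonneg (hα₂ t x y hz) (deriv_deriv_nonneg_of_isLocalMin hmin_y hcont_y)
  linarith [deriv_nonpos_of_isLocalMinOn_Iic hmin_t]

theorem deriv_deriv_sub {f f' g : ℝ → ℝ} {f'' x : ℝ} (hf : ∀ y, HasDerivAt f (f' y) y)
    (hf' : HasDerivAt f' f'' x) (hg : ContDiff ℝ 2 g) :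
    deriv (deriv fun y => f y - g y) x = f'' - deriv (deriv g) x := by
  have hg' : Differentiable ℝ (deriv g) := (contDiff_succ_iff_deriv.1 hg).2.2.differentiable_one
  have hderiv : (deriv fun y => f y - g y) = fun y => f' y - deriv g y := funext fun y =>
    ((hf y).fun_sub (hg.differentiable two_ne_zero y).hasDerivAt).deriv
  rw [hderiv, (hf'.fun_sub (hg' x).hasDerivAt).deriv]

theorem le_sub_of_strict_subsolution {F Ft Fx Fxx α β : ℝ → ℝ → ℝ} {w : ℝ → ℝ → ℝ → ℝ}
    {Ω : Set (ℝ × ℝ × ℝ)} {J : Set ℝ} (hΩ : IsCompact Ω) (hJ : ∀ z ∈ Ω, z.1 ∈ J)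
    (hF : HasC12On F Ft Fx Fxx (J ×ˢ univ))
    (hpde : ∀ t ∈ J, ∀ x, Ft t x = α t x * Fxx t x + β t x * Fx t x)
    (hα : ∀ t x y, (t, x, y) ∈ Ω → 0 ≤ α t x ∧ 0 ≤ α t y)
    (hw : ContDiff ℝ 2 fun z : ℝ × ℝ × ℝ => w z.1 z.2.1 z.2.2)
    (hint : ∀ t x y, (t, x, y) ∈ Ω → F t x - F t y < w t x y → Ω ∈ 𝓝[Iic t ×ˢ univ] (t, x, y))
    (hsub : ∀ t x y, (t, x, y) ∈ Ω → deriv (fun s => w s x y) t <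
      α t x * deriv (deriv fun x' => w t x' y) x + α t y * deriv (deriv (w t x)) y
        + β t x * deriv (fun x' => w t x' y) x + β t y * deriv (w t x) y) :
    ∀ t x y, (t, x, y) ∈ Ω → w t x y ≤ F t x - F t y := by
  have hcontF {π : ℝ × ℝ × ℝ → ℝ} (hπ : Continuous π) : ContinuousOn (fun z => F z.1 (π z)) Ω :=
    hF.continuousOn.comp (f := fun z : ℝ × ℝ × ℝ => (z.1, π z)) (by fun_prop)
      fun z hz => ⟨hJ z hz, mem_univ _⟩
  have hw_t x y : ContDiff ℝ 2 fun s => w s x y :=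
    hw.comp (f := fun s => (s, x, y)) (by fun_prop)
  have hw_x t y : ContDiff ℝ 2 fun x' => w t x' y :=
    hw.comp (f := fun x' => (t, x', y)) (by fun_prop)
  have hw_y t x : ContDiff ℝ 2 (w t x) := hw.comp (f := fun y' => (t, x, y')) (by fun_prop)
  suffices ∀ t x y, (t, x, y) ∈ Ω → 0 ≤ F t x - F t y - w t x y from
    fun t x y hz => sub_nonneg.1 (this t x y hz)
  refine nonneg_of_strict_supersolution (α₁ := fun t x _ => α t x) (α₂ := fun t _ y => α t y)
    (β₁ := fun t x _ => β t x) (β₂ := fun t _ y => β t y) hΩ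
    (((hcontF (by fun_prop)).sub (hcontF (by fun_prop))).sub hw.continuous.continuousOn)
    (fun t x y hz => (hα t x y hz).1) (fun t x y hz => (hα t x y hz).2)
    (fun t x y hz h => hint t x y hz (sub_neg.1 h)) fun t x y hz => ?_
  have ht : t ∈ J := hJ _ hz
  have hFx x' : HasDerivAt (F t) (Fx t x') x' := hF.hasDerivAt_space t x' ⟨ht, mem_univ _⟩
  have hFt x' : HasDerivAt (fun s => F s x') (Ft t x') t :=
    hF.hasDerivAt_time t x' ⟨ht, mem_univ _⟩
  have hFxx x' : HasDerivAt (Fx t) (Fxx t x') x' :=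
    hF.hasDerivAt_space_space t x' ⟨ht, mem_univ _⟩
  have hV_t := ((hFt x).fun_sub (hFt y)).fun_sub
    ((hw_t x y).differentiable two_ne_zero t).hasDerivAt
  have hV_x := ((hFx x).sub_const (F t y)).fun_sub
    ((hw_x t y).differentiable two_ne_zero x).hasDerivAt
  have hV_y := ((hFx y).const_sub (F t x)).fun_sub
    ((hw_y t x).differentiable two_ne_zero y).hasDerivAt
  have hV_xx := deriv_deriv_sub (fun x' => (hFx x').sub_const (F t y)) (hFxx x) (hw_x t y)
  have hV_yy := deriv_deriv_sub (fun y' => (hFx y').const_sub (F t x)) (hFxx y).fun_neg (hw_y t x)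
  rw [hV_t.deriv, hV_x.deriv, hV_y.deriv, hV_xx, hV_yy, hpde t ht x, hpde t ht y]
  linarith [hsub t x y hz]

end MinimumPrinciple

section Barrier

/-- Positive exactly on the disc of radius `√2` in the `(x, y)`-plane centred at
`(x₀ + r, x₀ - r)`, `r = 1 + σ (t₀ - t)`. The disc slides along the anti-diagonal as `t` grows and
touches the diagonal `x = y` at `(x₀, x₀)` when `t = t₀`. -/
def slidingDisc (σ t₀ x₀ t x y : ℝ) : ℝ :=
  2 - (x - (x₀ + (1 + σ * (t₀ - t)))) ^ 2 - (y - (x₀ - (1 + σ * (t₀ - t)))) ^ 2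

/-- The Hopf barrier of amplitude `ε` on the sliding disc: a convex function of `slidingDisc`,
damped exponentially in time. -/
def hopfBarrier (ε K k σ t₀ x₀ t x y : ℝ) : ℝ :=
  ε * Real.exp (K * (t₀ - t)) * (slidingDisc σ t₀ x₀ t x y + k * slidingDisc σ t₀ x₀ t x y ^ 2)

theorem abs_sub_le_two_of_slidingDisc_nonneg {σ t₀ x₀ t x y : ℝ}
    (h : 0 ≤ slidingDisc σ t₀ x₀ t x y) :
    |x - (x₀ + (1 + σ * (t₀ - t)))| ≤ 2 ∧ |y - (x₀ - (1 + σ * (t₀ - t)))| ≤ 2 := by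
  unfold slidingDisc at h
  constructor <;> refine abs_le_of_sq_le_sq ?_ zero_le_two <;> nlinarith only [h, sq_nonneg
    (x - (x₀ + (1 + σ * (t₀ - t)))), sq_nonneg (y - (x₀ - (1 + σ * (t₀ - t))))]

theorem le_of_slidingDisc_nonneg {σ t₀ x₀ t x y : ℝ} (hσ : 0 ≤ σ) (ht : t ≤ t₀)
    (h : 0 ≤ slidingDisc σ t₀ x₀ t x y) : y ≤ x := by
  have hr : 0 ≤ σ * (t₀ - t) := mul_nonneg hσ (sub_nonneg.2 ht)
  unfold slidingDisc at h
  nlinarith only [h, hr, sq_nonneg (x + y - 2 * x₀), sq_nonneg (x - y)]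

theorem slidingDisc_le_two (σ t₀ x₀ t x y : ℝ) : slidingDisc σ t₀ x₀ t x y ≤ 2 := by
  unfold slidingDisc
  linarith [sq_nonneg (x - (x₀ + (1 + σ * (t₀ - t)))), sq_nonneg (y - (x₀ - (1 + σ * (t₀ - t))))]

theorem continuous_slidingDisc (σ t₀ x₀ : ℝ) :
    Continuous fun z : ℝ × ℝ × ℝ => slidingDisc σ t₀ x₀ z.1 z.2.1 z.2.2 := by
  unfold slidingDisc
  fun_prop

theorem contDiff_hopfBarrier (ε K k σ t₀ x₀ : ℝ) {n : WithTop ℕ∞} :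
    ContDiff ℝ n fun z : ℝ × ℝ × ℝ => hopfBarrier ε K k σ t₀ x₀ z.1 z.2.1 z.2.2 := by
  unfold hopfBarrier slidingDisc
  fun_prop

theorem hopfBarrier_eq_zero_of_slidingDisc_eq_zero {ε K k σ t₀ x₀ t x y : ℝ}
    (h : slidingDisc σ t₀ x₀ t x y = 0) :
    hopfBarrier ε K k σ t₀ x₀ t x y = 0 := by
  simp [hopfBarrier, h]

theorem hasDerivAt_add_mul_sq {f : ℝ → ℝ} {f' x : ℝ} (k : ℝ) (hf : HasDerivAt f f' x) :
    HasDerivAt (fun z => f z + k * f z ^ 2) ((1 + 2 * k * f x) * f') x :=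
  (hf.fun_add ((hf.fun_pow 2).const_mul k)).congr_deriv (by push_cast; ring)

theorem deriv_deriv_add_mul_sq {f f' : ℝ → ℝ} {f'' x : ℝ} (A k : ℝ)
    (hf : ∀ z, HasDerivAt f (f' z) z) (hf' : HasDerivAt f' f'' x) :
    deriv (deriv fun z => A * (f z + k * f z ^ 2)) x
      = A * ((1 + 2 * k * f x) * f'' + 2 * k * f' x ^ 2) := by
  have hderiv :
      (deriv fun z => A * (f z + k * f z ^ 2)) = fun z => A * ((1 + 2 * k * f z) * f' z) :=
    funext fun z => ((hasDerivAt_add_mul_sq k (hf z)).const_mul A).deriv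
  rw [hderiv]
  refine (((((hf x).const_mul (2 * k)).const_add 1).fun_mul hf').const_mul A).deriv.trans ?_
  ring

variable (ε K k σ t₀ x₀ t x y : ℝ)

theorem hasDerivAt_slidingDisc_left :
    HasDerivAt (fun x' => slidingDisc σ t₀ x₀ t x' y)
      (-2 * (x - (x₀ + (1 + σ * (t₀ - t))))) x := by
  unfold slidingDisc
  refine (((((hasDerivAt_id x).sub_const _).fun_pow 2).const_sub 2).sub_const _).congr_deriv ?_
  simp

theorem hasDerivAt_slidingDisc_right :
    HasDerivAt (slidingDisc σ t₀ x₀ t x) (-2 * (y - (x₀ - (1 + σ * (t₀ - t))))) y := by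
  unfold slidingDisc
  refine ((((hasDerivAt_id y).sub_const _).fun_pow 2).const_sub _).congr_deriv ?_
  simp

theorem hasDerivAt_slidingDisc_time :
    HasDerivAt (fun s => slidingDisc σ t₀ x₀ s x y)
      (2 * σ * (y - (x₀ - (1 + σ * (t₀ - t))) - (x - (x₀ + (1 + σ * (t₀ - t)))))) t := by
  have hr : HasDerivAt (fun s => 1 + σ * (t₀ - s)) (-σ) t := by
    simpa using (((hasDerivAt_id t).const_sub t₀).const_mul σ).const_add 1
  unfold slidingDisc
  refine (((((hr.const_add x₀).const_sub x).fun_pow 2).const_sub 2).fun_sub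
    (((hr.const_sub x₀).const_sub y).fun_pow 2)).congr_deriv ?_
  push_cast
  ring

theorem deriv_hopfBarrier_left :
    deriv (fun x' => hopfBarrier ε K k σ t₀ x₀ t x' y) x = ε * Real.exp (K * (t₀ - t)) *
      ((1 + 2 * k * slidingDisc σ t₀ x₀ t x y) * (-2 * (x - (x₀ + (1 + σ * (t₀ - t)))))) :=
  ((hasDerivAt_add_mul_sq k (hasDerivAt_slidingDisc_left σ t₀ x₀ t x y)).const_mul _).deriv

theorem deriv_hopfBarrier_right :
    deriv (hopfBarrier ε K k σ t₀ x₀ t x) y = ε * Real.exp (K * (t₀ - t)) *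
      ((1 + 2 * k * slidingDisc σ t₀ x₀ t x y) * (-2 * (y - (x₀ - (1 + σ * (t₀ - t)))))) :=
  ((hasDerivAt_add_mul_sq k (hasDerivAt_slidingDisc_right σ t₀ x₀ t x y)).const_mul _).deriv

theorem deriv_deriv_hopfBarrier_left :
    deriv (deriv fun x' => hopfBarrier ε K k σ t₀ x₀ t x' y) x = ε * Real.exp (K * (t₀ - t)) *
      ((1 + 2 * k * slidingDisc σ t₀ x₀ t x y) * -2
        + 2 * k * (-2 * (x - (x₀ + (1 + σ * (t₀ - t))))) ^ 2) :=
  deriv_deriv_add_mul_sq _ k (fun x' => hasDerivAt_slidingDisc_left σ t₀ x₀ t x' y)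
    (by simpa using ((hasDerivAt_id x).sub_const _).const_mul (-2))

theorem deriv_deriv_hopfBarrier_right :
    deriv (deriv (hopfBarrier ε K k σ t₀ x₀ t x)) y = ε * Real.exp (K * (t₀ - t)) *
      ((1 + 2 * k * slidingDisc σ t₀ x₀ t x y) * -2
        + 2 * k * (-2 * (y - (x₀ - (1 + σ * (t₀ - t))))) ^ 2) :=
  deriv_deriv_add_mul_sq _ k (fun y' => hasDerivAt_slidingDisc_right σ t₀ x₀ t x y')
    (by simpa using ((hasDerivAt_id y).sub_const _).const_mul (-2))

theorem deriv_hopfBarrier_time :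
    deriv (fun s => hopfBarrier ε K k σ t₀ x₀ s x y) t = ε * Real.exp (K * (t₀ - t)) *
      (-K * (slidingDisc σ t₀ x₀ t x y + k * slidingDisc σ t₀ x₀ t x y ^ 2)
        + (1 + 2 * k * slidingDisc σ t₀ x₀ t x y) *
          (2 * σ * (y - (x₀ - (1 + σ * (t₀ - t))) - (x - (x₀ + (1 + σ * (t₀ - t))))))) := by
  have hexp : HasDerivAt (fun s => ε * Real.exp (K * (t₀ - s)))
      (-K * (ε * Real.exp (K * (t₀ - t)))) t :=
    ((((hasDerivAt_id t).const_sub t₀).const_mul K).exp.const_mul ε).congr_deriv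
      (by simp only [id]; ring)
  refine (hexp.fun_mul
    (hasDerivAt_add_mul_sq k (hasDerivAt_slidingDisc_time σ t₀ x₀ t x y))).deriv.trans ?_
  ring

end Barrier

section Hopf

theorem barrier_drift_le {C σ p q α₁ α₂ β₁ β₂ : ℝ} (hσ : 0 ≤ σ) (hp : |p| ≤ 2) (hq : |q| ≤ 2)
    (hα₁ : α₁ ≤ C) (hα₂ : α₂ ≤ C) (hβ₁ : |β₁| ≤ C) (hβ₂ : |β₂| ≤ C) :
    2 * σ * (q - p) + 2 * α₁ + 2 * α₂ + 2 * β₁ * p + 2 * β₂ * q ≤ 8 * σ + 12 * C := by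
  have hmul {β r : ℝ} (hβ : |β| ≤ C) (hr : |r| ≤ 2) : β * r ≤ C * 2 :=
    (le_abs_self _).trans <| (abs_mul β r).trans_le <|
      mul_le_mul hβ hr (abs_nonneg r) ((abs_nonneg β).trans hβ)
  have hσqp : σ * (q - p) ≤ σ * 4 :=
    mul_le_mul_of_nonneg_left (by linarith [(abs_le.1 hp).1, (abs_le.1 hq).2]) hσ
  linarith [hmul hβ₁ hp, hmul hβ₂ hq]

/-- The convexity `k` of the barrier is chosen so that near the edge `η = 0` of the disc its second
derivatives beat the drift `D`, the damping rate `K` so that the rest of the disc is controlled. -/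
theorem barrier_polynomial_lt {c D η k p q s α₁ α₂ β₁ β₂ : ℝ} (hk : 0 ≤ k) (hc : 0 ≤ c)
    (hkD : 16 * k * c = D + 1) (hD : 0 ≤ D) (hη : 0 ≤ η) (hpq : p ^ 2 + q ^ 2 = 2 - η)
    (hα₁ : c ≤ α₁) (hα₂ : c ≤ α₂)
    (hdrift : s + 2 * α₁ + 2 * α₂ + 2 * β₁ * p + 2 * β₂ * q ≤ D) :
    -(2 * k * D + 8 * k * c) * (η + k * η ^ 2) + (1 + 2 * k * η) * s
      < α₁ * ((1 + 2 * k * η) * -2 + 2 * k * (-2 * p) ^ 2)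
        + α₂ * ((1 + 2 * k * η) * -2 + 2 * k * (-2 * q) ^ 2)
        + β₁ * ((1 + 2 * k * η) * (-2 * p)) + β₂ * ((1 + 2 * k * η) * (-2 * q)) := by
  have hfirst : (1 + 2 * k * η) * (s + 2 * α₁ + 2 * α₂ + 2 * β₁ * p + 2 * β₂ * q)
      ≤ (1 + 2 * k * η) * D := mul_le_mul_of_nonneg_left hdrift (by positivity)
  have hsecond : c * (2 - η) ≤ α₁ * p ^ 2 + α₂ * q ^ 2 := by
    rw [← hpq, mul_add]
    gcongr
  have hsecond_k : 8 * k * (c * (2 - η)) ≤ 8 * k * (α₁ * p ^ 2 + α₂ * q ^ 2) :=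
    mul_le_mul_of_nonneg_left hsecond (by positivity)
  have hsq : 0 ≤ (2 * k * D + 8 * k * c) * (k * η ^ 2) := by positivity
  linarith

theorem exists_hopfBarrier_strict_subsolution {c C σ : ℝ} (hc : 0 < c) (hC : 0 ≤ C) (hσ : 0 ≤ σ) :
    ∃ K k : ℝ, 0 < k ∧ ∀ ε > 0, ∀ t₀ x₀ t x y α₁ α₂ β₁ β₂ : ℝ, α₁ ∈ Icc c C → α₂ ∈ Icc c C →
      |β₁| ≤ C → |β₂| ≤ C → 0 ≤ slidingDisc σ t₀ x₀ t x y →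
      deriv (fun s => hopfBarrier ε K k σ t₀ x₀ s x y) t
        < α₁ * deriv (deriv fun x' => hopfBarrier ε K k σ t₀ x₀ t x' y) x
          + α₂ * deriv (deriv (hopfBarrier ε K k σ t₀ x₀ t x)) y
          + β₁ * deriv (fun x' => hopfBarrier ε K k σ t₀ x₀ t x' y) x
          + β₂ * deriv (hopfBarrier ε K k σ t₀ x₀ t x) y := by
  set D := 8 * σ + 12 * C
  set k := (D + 1) / (16 * c) with hk
  have hD0 : 0 ≤ D := by positivity
  have hk0 : 0 < k := by positivity
  refine ⟨2 * k * D + 8 * k * c, k, hk0, fun ε hε t₀ x₀ t x y α₁ α₂ β₁ β₂ hα₁ hα₂ hβ₁ hβ₂ hη => ?_⟩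
  obtain ⟨hp, hq⟩ := abs_sub_le_two_of_slidingDisc_nonneg hη
  have hlt := barrier_polynomial_lt hk0.le hc.le (by rw [hk]; field_simp) hD0 hη
    (by unfold slidingDisc; ring) hα₁.1 hα₂.1 (barrier_drift_le hσ hp hq hα₁.2 hα₂.2 hβ₁ hβ₂)
  rw [deriv_hopfBarrier_time, deriv_deriv_hopfBarrier_left, deriv_deriv_hopfBarrier_right,
    deriv_hopfBarrier_left, deriv_hopfBarrier_right]
  refine (mul_lt_mul_of_pos_left hlt (mul_pos hε (Real.exp_pos _))).trans_eq ?_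
  ring

/-- The space-time region swept by the closed sliding disc between the times `t₁` and `t₀`. -/
def slidingTube (σ t₀ x₀ t₁ : ℝ) : Set (ℝ × ℝ × ℝ) :=
  {z | z.1 ∈ Icc t₁ t₀ ∧ 0 ≤ slidingDisc σ t₀ x₀ z.1 z.2.1 z.2.2}

theorem mem_Icc_of_mem_slidingTube {σ t₀ x₀ t₁ t x y : ℝ} (hσ : 0 ≤ σ)
    (h : (t, x, y) ∈ slidingTube σ t₀ x₀ t₁) :
    x ∈ Icc (x₀ - (3 + σ * (t₀ - t₁))) (x₀ + (3 + σ * (t₀ - t₁))) ∧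
      y ∈ Icc (x₀ - (3 + σ * (t₀ - t₁))) (x₀ + (3 + σ * (t₀ - t₁))) := by
  obtain ⟨⟨ht₁, ht₀⟩, hη⟩ := h
  obtain ⟨hx, hy⟩ := abs_sub_le_two_of_slidingDisc_nonneg hη
  have hlo : 0 ≤ σ * (t₀ - t) := mul_nonneg hσ (sub_nonneg.2 ht₀)
  have hhi : σ * (t₀ - t) ≤ σ * (t₀ - t₁) := by gcongr
  rw [abs_le] at hx hy
  constructor <;> constructor <;> linarith

theorem isCompact_slidingTube {σ : ℝ} (hσ : 0 ≤ σ) (t₀ x₀ t₁ : ℝ) :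
    IsCompact (slidingTube σ t₀ x₀ t₁) := by
  refine IsCompact.of_isClosed_subset
    (isCompact_Icc.prod (isCompact_Icc.prod isCompact_Icc)) ?_
    fun _ hz => ⟨hz.1, mem_Icc_of_mem_slidingTube hσ hz⟩
  exact (isClosed_Icc.preimage continuous_fst).inter
    (isClosed_le continuous_const (continuous_slidingDisc σ t₀ x₀))

theorem slidingTube_mem_nhdsWithin {σ t₀ x₀ t₁ t x y : ℝ} (ht : t ∈ Ioc t₁ t₀)
    (hη : 0 < slidingDisc σ t₀ x₀ t x y) :
    slidingTube σ t₀ x₀ t₁ ∈ 𝓝[Iic t ×ˢ univ] (t, x, y) := by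
  have ht₁ : ∀ᶠ z : ℝ × ℝ × ℝ in 𝓝[Iic t ×ˢ univ] (t, x, y), t₁ < z.1 :=
    nhdsWithin_le_nhds (continuousAt_fst.eventually_const_lt ht.1)
  have hdisc : ∀ᶠ z : ℝ × ℝ × ℝ in 𝓝[Iic t ×ˢ univ] (t, x, y),
      0 < slidingDisc σ t₀ x₀ z.1 z.2.1 z.2.2 :=
    nhdsWithin_le_nhds ((continuous_slidingDisc σ t₀ x₀).continuousAt.eventually_const_lt hη)
  filter_upwards [ht₁, hdisc, self_mem_nhdsWithin] with z hz₁ hzη hz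
  exact ⟨⟨hz₁.le, hz.1.trans ht.2⟩, hzη.le⟩

theorem hopfBarrier_le {ε K k σ t₀ x₀ t x y : ℝ} (hε : 0 ≤ ε) (hk : 0 ≤ k)
    (hη : 0 ≤ slidingDisc σ t₀ x₀ t x y) :
    hopfBarrier ε K k σ t₀ x₀ t x y ≤ ε * Real.exp (K * (t₀ - t)) * (2 + 4 * k) := by
  have hle := slidingDisc_le_two σ t₀ x₀ t x y
  have hsq : slidingDisc σ t₀ x₀ t x y ^ 2 ≤ 4 := by nlinarith only [hle, hη]
  unfold hopfBarrier
  refine mul_le_mul_of_nonneg_left ?_ (by positivity)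
  nlinarith only [hle, mul_le_mul_of_nonneg_left hsq hk]

theorem two_mul_le_hopfBarrier {ε K k σ t₀ x₀ h : ℝ} (hε : 0 ≤ ε) (hk : 0 ≤ k)
    (hh : h ∈ Ioo 0 1) : 2 * ε * h ≤ hopfBarrier ε K k σ t₀ x₀ t₀ (x₀ + h) (x₀ - h) := by
  have hη : 2 * h ≤ slidingDisc σ t₀ x₀ t₀ (x₀ + h) (x₀ - h) := by
    unfold slidingDisc
    nlinarith only [hh.1, hh.2]
  have hsq : 0 ≤ k * slidingDisc σ t₀ x₀ t₀ (x₀ + h) (x₀ - h) ^ 2 := by positivity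
  rw [hopfBarrier, sub_self, mul_zero, Real.exp_zero, mul_one, mul_comm 2 ε, mul_assoc]
  exact mul_le_mul_of_nonneg_left (by linarith) hε

theorem exists_bounds_of_isCompact {X : Type*} [TopologicalSpace X] {s : Set X} (hs : IsCompact s)
    {f g : X → ℝ} (hf : ContinuousOn f s) (hg : ContinuousOn g s) (hpos : ∀ x ∈ s, 0 < f x) :
    ∃ c > 0, ∃ C ≥ 0, ∀ x ∈ s, f x ∈ Icc c C ∧ |g x| ≤ C := by
  obtain ⟨c, hc, hcf⟩ := hs.exists_forall_le' hf hpos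
  obtain ⟨Cf, hCf⟩ := hs.exists_bound_of_continuousOn hf
  obtain ⟨Cg, hCg⟩ := hs.exists_bound_of_continuousOn hg
  refine ⟨c, hc, |Cf| + |Cg|, by positivity, fun x hx => ⟨⟨hcf x hx, ?_⟩, ?_⟩⟩
  · linarith [le_abs_self (f x), hCf x hx, le_abs_self Cf, abs_nonneg Cg, Real.norm_eq_abs (f x)]
  · linarith [hCg x hx, le_abs_self Cg, abs_nonneg Cf, Real.norm_eq_abs (g x)]

theorem sub_le_sub_of_slidingDisc_nonneg {G : ℝ → ℝ} (hG : Monotone G) {σ t₀ x₀ t x y x₁ y₁ : ℝ}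
    (hx₁ : |x₁ - x₀| + 1 ≤ σ * (t₀ - t)) (hy₁ : |y₁ - x₀| + 1 ≤ σ * (t₀ - t))
    (hη : 0 ≤ slidingDisc σ t₀ x₀ t x y) : G x₁ - G y₁ ≤ G x - G y := by
  obtain ⟨hx, hy⟩ := abs_sub_le_two_of_slidingDisc_nonneg hη
  rw [abs_le] at hx hy
  exact sub_le_sub (hG (by linarith [le_abs_self (x₁ - x₀)]))
    (hG (by linarith [neg_abs_le (y₁ - x₀)]))

theorem le_two_mul_of_hasDerivAt {f : ℝ → ℝ} {f' x κ : ℝ} (hf : HasDerivAt f f' x)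
    (h : ∀ᶠ h in 𝓝[>] (0 : ℝ), κ * h ≤ f (x + h) - f (x - h)) : κ ≤ 2 * f' := by
  have hadd : HasDerivAt (fun h => f (x + h)) f' 0 := HasDerivAt.comp_const_add x 0 (by simpa)
  have hsub : HasDerivAt (fun h => f (x - h)) (-f') 0 := HasDerivAt.comp_const_sub x 0 (by simpa)
  have hdiff : HasDerivAt (fun h => f (x + h) - f (x - h)) (2 * f') 0 :=
    (hadd.fun_sub hsub).congr_deriv (by ring)
  have hslope := (hasDerivAt_iff_tendsto_slope.1 hdiff).mono_left (nhdsGT_le_nhdsNE 0)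
  refine ge_of_tendsto hslope ?_
  filter_upwards [h, self_mem_nhdsWithin] with r hr hr0
  rw [slope_def_field, le_div_iff₀ (by simpa using hr0)]
  simpa using hr

variable {F Ft Fx Fxx α β : ℝ → ℝ → ℝ} {t₁ t₀ : ℝ}

theorem exists_hopfBarrier_le_sub (ht : t₁ < t₀) (hF : HasC12On F Ft Fx Fxx (Icc t₁ t₀ ×ˢ univ))
    (hα : ContinuousOn (uncurry α) (Icc t₁ t₀ ×ˢ univ))
    (hβ : ContinuousOn (uncurry β) (Icc t₁ t₀ ×ˢ univ))
    (hαpos : ∀ t ∈ Icc t₁ t₀, ∀ x, 0 < α t x)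
    (hpde : ∀ t ∈ Icc t₁ t₀, ∀ x, Ft t x = α t x * Fxx t x + β t x * Fx t x)
    (hmono : ∀ t ∈ Icc t₁ t₀, Monotone (F t)) {x₁ y₁ : ℝ} (hlt : F t₁ y₁ < F t₁ x₁) (x₀ : ℝ) :
    ∃ ε > 0, ∃ K, ∃ k ≥ 0, ∃ σ, ∀ t x y, (t, x, y) ∈ slidingTube σ t₀ x₀ t₁ →
      hopfBarrier ε K k σ t₀ x₀ t x y ≤ F t x - F t y := by
  have ht' : 0 < t₀ - t₁ := sub_pos.2 ht
  set σ := (|x₁ - x₀| + |y₁ - x₀| + 1) / (t₀ - t₁) with hσ_def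
  have hσ : 0 ≤ σ := by positivity
  have hσt : σ * (t₀ - t₁) = |x₁ - x₀| + |y₁ - x₀| + 1 := by rw [hσ_def]; field_simp
  set R := 3 + σ * (t₀ - t₁)
  have hrect : Icc t₁ t₀ ×ˢ Icc (x₀ - R) (x₀ + R) ⊆ Icc t₁ t₀ ×ˢ univ :=
    prod_mono_right (subset_univ _)
  obtain ⟨c, hc, C, hC, hbounds⟩ := exists_bounds_of_isCompact (isCompact_Icc.prod isCompact_Icc)
    (hα.mono hrect) (hβ.mono hrect) fun z hz => hαpos z.1 hz.1 z.2
  obtain ⟨K, k, hk, hsub⟩ := exists_hopfBarrier_strict_subsolution hc hC hσ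
  set ε := (F t₁ x₁ - F t₁ y₁) / (Real.exp (K * (t₀ - t₁)) * (2 + 4 * k)) with hε_def
  have hε : 0 < ε := div_pos (sub_pos.2 hlt) (by positivity)
  have hinit x y (hη : 0 ≤ slidingDisc σ t₀ x₀ t₁ x y) :
      hopfBarrier ε K k σ t₀ x₀ t₁ x y ≤ F t₁ x - F t₁ y :=
    calc hopfBarrier ε K k σ t₀ x₀ t₁ x y
        ≤ ε * Real.exp (K * (t₀ - t₁)) * (2 + 4 * k) := hopfBarrier_le hε.le hk.le hη
      _ = F t₁ x₁ - F t₁ y₁ := by rw [hε_def]; field_simp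
      _ ≤ F t₁ x - F t₁ y := sub_le_sub_of_slidingDisc_nonneg (hmono t₁ (left_mem_Icc.2 ht.le))
        (by linarith [abs_nonneg (y₁ - x₀)]) (by linarith [abs_nonneg (x₁ - x₀)]) hη
  refine ⟨ε, hε, K, k, hk.le, σ, le_sub_of_strict_subsolution (isCompact_slidingTube hσ t₀ x₀ t₁)
    (fun z hz => hz.1) hF hpde (fun t x y hz => ?_) (contDiff_hopfBarrier ..)
    (fun t x y hz hneg => ?_) fun t x y hz => ?_⟩
  · exact ⟨(hαpos t hz.1 x).le, (hαpos t hz.1 y).le⟩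
  · have ht₁ : t ≠ t₁ := fun h => hneg.not_ge (h ▸ hinit x y (h ▸ hz.2))
    have hη : slidingDisc σ t₀ x₀ t x y ≠ 0 := fun h => hneg.not_ge <| by
      rw [hopfBarrier_eq_zero_of_slidingDisc_eq_zero h, sub_nonneg]
      exact hmono t hz.1 (le_of_slidingDisc_nonneg hσ hz.1.2 hz.2)
    exact slidingTube_mem_nhdsWithin ⟨hz.1.1.lt_of_ne' ht₁, hz.1.2⟩ (hz.2.lt_of_ne' hη)
  · obtain ⟨hx, hy⟩ := mem_Icc_of_mem_slidingTube hσ hz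
    have hbx := hbounds (t, x) ⟨hz.1, hx⟩
    have hby := hbounds (t, y) ⟨hz.1, hy⟩
    exact hsub ε hε t₀ x₀ t x y _ _ _ _ hbx.1 hby.1 hbx.2 hby.2 hz.2

theorem space_deriv_pos_of_monotone (ht : t₁ < t₀)
    (hF : HasC12On F Ft Fx Fxx (Icc t₁ t₀ ×ˢ univ))
    (hα : ContinuousOn (uncurry α) (Icc t₁ t₀ ×ˢ univ))
    (hβ : ContinuousOn (uncurry β) (Icc t₁ t₀ ×ˢ univ))
    (hαpos : ∀ t ∈ Icc t₁ t₀, ∀ x, 0 < α t x)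
    (hpde : ∀ t ∈ Icc t₁ t₀, ∀ x, Ft t x = α t x * Fxx t x + β t x * Fx t x)
    (hmono : ∀ t ∈ Icc t₁ t₀, Monotone (F t)) (hnonconst : ∃ x y, F t₁ x ≠ F t₁ y) (x₀ : ℝ) :
    0 < Fx t₀ x₀ := by
  obtain ⟨y₁, x₁, hlt⟩ : ∃ y x, F t₁ y < F t₁ x :=
    let ⟨x, y, hne⟩ := hnonconst
    hne.lt_or_gt.elim (fun h => ⟨x, y, h⟩) fun h => ⟨y, x, h⟩
  obtain ⟨ε, hε, K, k, hk, σ, hle⟩ :=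
    exists_hopfBarrier_le_sub ht hF hα hβ hαpos hpde hmono hlt x₀
  have ht₀ : t₀ ∈ Icc t₁ t₀ := right_mem_Icc.2 ht.le
  have h2 : 2 * ε ≤ 2 * Fx t₀ x₀ := by
    refine le_two_mul_of_hasDerivAt (hF.hasDerivAt_space t₀ x₀ ⟨ht₀, mem_univ _⟩) ?_
    filter_upwards [Ioo_mem_nhdsGT (zero_lt_one' ℝ)] with h hh
    refine (two_mul_le_hopfBarrier hε.le hk hh).trans (hle t₀ _ _ ⟨ht₀, ?_⟩)
    simp only [slidingDisc]
    nlinarith only [hh.1, hh.2]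
  linarith

end Hopf

section Inverse

theorem isInvertible_toSpanSingleton {c : ℝ} (hc : c ≠ 0) :
    (ContinuousLinearMap.toSpanSingleton ℝ c).IsInvertible :=
  ⟨ContinuousLinearEquiv.unitsEquivAut ℝ (Units.mk0 c hc), by ext; simp⟩

theorem hasDerivAt_of_level_curve {f ft fx : ℝ → ℝ → ℝ} {γ : ℝ → ℝ} {t : ℝ}
    (hft : ∀ᶠ z in 𝓝 (t, γ t), HasDerivAt (fun s => f s z.2) (ft z.1 z.2) z.1)
    (hfx : ∀ᶠ z in 𝓝 (t, γ t), HasDerivAt (f z.1) (fx z.1 z.2) z.2)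
    (hft_cont : ContinuousAt (uncurry ft) (t, γ t)) (hfx_cont : ContinuousAt (uncurry fx) (t, γ t))
    (hne : fx t (γ t) ≠ 0) (hγ : ContinuousAt γ t) (hlevel : ∀ᶠ s in 𝓝 t, f s (γ s) = f t (γ t)) :
    HasDerivAt γ (-ft t (γ t) / fx t (γ t)) t := by
  let f₁ (s x : ℝ) : ℝ →L[ℝ] ℝ := .toSpanSingleton ℝ (ft s x)
  let f₂ (s x : ℝ) : ℝ →L[ℝ] ℝ := .toSpanSingleton ℝ (fx s x)
  have hlin : Continuous (ContinuousLinearMap.toSpanSingleton ℝ (M₁ := ℝ)) :=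
    ContinuousLinearMap.toSpanSingletonCLE.continuous
  have df₁ : ∀ᶠ z in 𝓝 (t, γ t), HasFDerivAt (f · z.2) (f₁ z.1 z.2) z.1 :=
    hft.mono fun _ h => h.hasFDerivAt
  have df₂ : ∀ᶠ z in 𝓝 (t, γ t), HasFDerivAt (f z.1 ·) (f₂ z.1 z.2) z.2 :=
    hfx.mono fun _ h => h.hasFDerivAt
  have cf₁ : ContinuousAt ↿f₁ (t, γ t) := hlin.continuousAt.comp hft_cont
  have cf₂ : ContinuousAt ↿f₂ (t, γ t) := hlin.continuousAt.comp hfx_cont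
  have hinv : (f₂ t (γ t)).IsInvertible := isInvertible_toSpanSingleton hne
  have hψ := (hasStrictFDerivAt_implicitFunctionOfBivariate df₁ df₂ cf₁ cf₂
    hinv).hasStrictDerivAt.hasDerivAt
  have hγψ := (continuousAt_id.prodMk hγ).eventually
    (eventually_apply_eq_iff_implicitFunctionOfBivariate df₁ df₂ cf₁ cf₂ hinv)
  refine (hψ.congr_of_eventuallyEq ?_).congr_deriv ?_
  · filter_upwards [hγψ, hlevel] with s hs hs' using (hs.1 hs').symm
  · have hval : (f₂ t (γ t)).inverse (ft t (γ t)) = ft t (γ t) / fx t (γ t) := by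
      simp [hinv.inverse_apply_eq, f₂, hne]
    simp [hval, f₁, neg_div]

section RightInverse

variable {f ft fx fxx I : ℝ → ℝ → ℝ} {Ω Ω' : Set (ℝ × ℝ)}

theorem HasC12On.hasDerivAt_space_rightInverse (hf : HasC12On f ft fx fxx Ω) (hΩ' : IsOpen Ω')
    (hne : ∀ t x, (t, x) ∈ Ω → fx t x ≠ 0) (hI : ContinuousOn (uncurry I) Ω')
    (hmaps : ∀ t u, (t, u) ∈ Ω' → (t, I t u) ∈ Ω) (hfI : ∀ t u, (t, u) ∈ Ω' → f t (I t u) = u)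
    {t u : ℝ} (h : (t, u) ∈ Ω') :
    HasDerivAt (I t) (fx t (I t u))⁻¹ u := by
  have hIt : ContinuousAt (I t) u :=
    (hI.continuousAt (hΩ'.mem_nhds h)).comp (f := fun v => (t, v)) (by fun_prop)
  refine (hf.hasDerivAt_space t _ (hmaps t u h)).of_local_left_inverse hIt
    (hne t _ (hmaps t u h)) ?_
  filter_upwards [(Continuous.prodMk_right t).continuousAt.preimage_mem_nhds
    (hΩ'.mem_nhds h)] with v hv using hfI t v hv

theorem HasC12On.hasDerivAt_time_rightInverse (hf : HasC12On f ft fx fxx Ω) (hΩ : IsOpen Ω)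
    (hΩ' : IsOpen Ω')
    (hne : ∀ t x, (t, x) ∈ Ω → fx t x ≠ 0) (hI : ContinuousOn (uncurry I) Ω')
    (hmaps : ∀ t u, (t, u) ∈ Ω' → (t, I t u) ∈ Ω) (hfI : ∀ t u, (t, u) ∈ Ω' → f t (I t u) = u)
    {t u : ℝ} (h : (t, u) ∈ Ω') :
    HasDerivAt (fun s => I s u) (-ft t (I t u) / fx t (I t u)) t := by
  have hIu : ContinuousAt (fun s => I s u) t :=
    (hI.continuousAt (hΩ'.mem_nhds h)).comp (f := fun s => (s, u)) (by fun_prop)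
  have hnhds : Ω ∈ 𝓝 (t, I t u) := hΩ.mem_nhds (hmaps t u h)
  refine hasDerivAt_of_level_curve (f := f) (ft := ft)
    (eventually_of_mem hnhds fun z => hf.hasDerivAt_time z.1 z.2)
    (eventually_of_mem hnhds fun z => hf.hasDerivAt_space z.1 z.2)
    (hf.continuousOn_time.continuousAt hnhds) (hf.continuousOn_space.continuousAt hnhds)
    (hne t _ (hmaps t u h)) hIu ?_
  filter_upwards [(Continuous.prodMk_left u).continuousAt.preimage_mem_nhds
    (hΩ'.mem_nhds h)] with s hs using (hfI s u hs).trans (hfI t u h).symm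

theorem HasC12On.rightInverse (hf : HasC12On f ft fx fxx Ω) (hΩ : IsOpen Ω) (hΩ' : IsOpen Ω')
    (hne : ∀ t x, (t, x) ∈ Ω → fx t x ≠ 0) (hI : ContinuousOn (uncurry I) Ω')
    (hmaps : ∀ t u, (t, u) ∈ Ω' → (t, I t u) ∈ Ω) (hfI : ∀ t u, (t, u) ∈ Ω' → f t (I t u) = u) :
    HasC12On I (fun t u => -ft t (I t u) / fx t (I t u)) (fun t u => (fx t (I t u))⁻¹)
      (fun t u => -fxx t (I t u) / fx t (I t u) ^ 3) Ω' := by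
  have hpair : ContinuousOn (fun z : ℝ × ℝ => (z.1, I z.1 z.2)) Ω' := continuousOn_fst.prodMk hI
  have hmaps' : MapsTo (fun z : ℝ × ℝ => (z.1, I z.1 z.2)) Ω' Ω := fun z hz => hmaps z.1 z.2 hz
  have hne' : ∀ z ∈ Ω', fx z.1 (I z.1 z.2) ≠ 0 := fun z hz => hne _ _ (hmaps' hz)
  have hft := hf.continuousOn_time.comp hpair hmaps'
  have hfx := hf.continuousOn_space.comp hpair hmaps'
  have hfxx := hf.continuousOn_space_space.comp hpair hmaps'
  have hI_space t u (h : (t, u) ∈ Ω') : HasDerivAt (I t) (fx t (I t u))⁻¹ u :=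
    hf.hasDerivAt_space_rightInverse hΩ' hne hI hmaps hfI h
  refine ⟨fun t u => hf.hasDerivAt_time_rightInverse hΩ hΩ' hne hI hmaps hfI, hI_space,
    fun t u h => ?_, hI, hft.neg.div hfx hne', hfx.inv₀ hne',
    hfxx.neg.div (hfx.pow 3) fun z hz => pow_ne_zero 3 (hne' z hz)⟩
  have hfx_comp : HasDerivAt (fun v => fx t (I t v)) (fxx t (I t u) * (fx t (I t u))⁻¹) u :=
    (hf.hasDerivAt_space_space t _ (hmaps t u h)).comp u (hI_space t u h)
  exact (hfx_comp.fun_inv (hne' _ h)).congr_deriv (by field_simp [hne' _ h])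

end RightInverse

theorem continuousOn_uncurry_of_strictMono_rightInverse {T X Y : Type*} [TopologicalSpace T]
    [LinearOrder X] [TopologicalSpace X] [OrderTopology X] [LinearOrder Y] [TopologicalSpace Y]
    [OrderClosedTopology Y] {f : T → X → Y} {I : T → Y → X} {J : Set T} {S : Set Y}
    (hmono : ∀ t ∈ J, StrictMono (f t)) (hcont : ∀ x, ContinuousOn (f · x) J)
    (hfI : ∀ t ∈ J, ∀ u ∈ S, f t (I t u) = u) : ContinuousOn (uncurry I) (J ×ˢ S) := by
  rintro ⟨t, u⟩ ⟨ht, hu⟩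
  have hfst : Tendsto Prod.fst (𝓝[J ×ˢ S] (t, u)) (𝓝[J] t) := by
    rw [nhdsWithin_prod_eq]
    exact tendsto_fst
  have hsnd : Tendsto Prod.snd (𝓝[J ×ˢ S] (t, u)) (𝓝 u) :=
    continuousAt_snd.tendsto.mono_left nhdsWithin_le_nhds
  have hf_tendsto x : Tendsto (fun z : T × Y => f z.1 x) (𝓝[J ×ˢ S] (t, u)) (𝓝 (f t x)) :=
    (hcont x t ht).tendsto.comp hfst
  refine tendsto_order.2 ⟨fun x hx => ?_, fun x hx => ?_⟩
  · have hlt : f t x < u := (hmono t ht hx).trans_eq (hfI t ht u hu)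
    filter_upwards [(hf_tendsto x).eventually_lt hsnd hlt, self_mem_nhdsWithin] with z hz hzJ
    exact (hmono z.1 hzJ.1).lt_iff_lt.1 (hz.trans_eq (hfI z.1 hzJ.1 z.2 hzJ.2).symm)
  · have hlt : u < f t x := (hfI t ht u hu).symm.trans_lt (hmono t ht hx)
    filter_upwards [hsnd.eventually_lt (hf_tendsto x) hlt, self_mem_nhdsWithin] with z hz hzJ
    exact (hmono z.1 hzJ.1).lt_iff_lt.1 ((hfI z.1 hzJ.1 z.2 hzJ.2).trans_lt hz)

theorem pinv_apply_of_strictMono {G : ℝ → ℝ} (hG : StrictMono G) (x : ℝ) : pinv G (G x) = x := by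
  simp only [pinv, hG.lt_iff_lt]
  exact csInf_Ioi

theorem apply_pinv_of_strictMono {G : ℝ → ℝ} (hG : StrictMono G) {u : ℝ} (hu : u ∈ range G) :
    G (pinv G u) = u := by
  obtain ⟨x, rfl⟩ := hu
  rw [pinv_apply_of_strictMono hG]

theorem Ioo_subset_range_of_tendsto {G : ℝ → ℝ} {l m : ℝ} (hG : Continuous G)
    (hbot : Tendsto G atBot (𝓝 l)) (htop : Tendsto G atTop (𝓝 m)) : Ioo l m ⊆ range G :=
  fun _ hu => mem_range_of_exists_le_of_exists_ge hG
    ((hbot.eventually_le_const hu.1).exists) ((htop.eventually_const_le hu.2).exists)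

end Inverse

section Equation

theorem hasDerivWithinAt_primitive {g : ℝ → ℝ} {m u : ℝ} (hg : ContinuousOn g (Icc 0 m))
    (hu : u ∈ Icc 0 m) : HasDerivWithinAt (primitive g) (g u) (Icc 0 m) u := by
  have : Fact (u ∈ Icc 0 m) := ⟨hu⟩
  exact intervalIntegral.integral_hasDerivWithinAt_right
    (hg.mono (uIcc_of_le hu.1 ▸ Icc_subset_Icc_right hu.2)).intervalIntegrable
    (hg.stronglyMeasurableAtFilter_nhdsWithin measurableSet_Icc u) (hg u hu)

theorem hasDerivAt_primitive_comp {g G : ℝ → ℝ} {m G' x : ℝ} (hg : ContinuousOn g (Icc 0 m))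
    (hmem : ∀ y, G y ∈ Icc 0 m) (hG : HasDerivAt G G' x) :
    HasDerivAt (fun y => primitive g (G y)) (g (G x) * G') x :=
  (hasDerivWithinAt_primitive hg (hmem x)).comp_hasDerivAt x hG (.of_forall hmem)

theorem deriv_deriv_primitive_comp {g G G' : ℝ → ℝ} {m G'' x : ℝ}
    (hg : ContDiffOn ℝ 1 g (Icc 0 m)) (hmem : ∀ y, G y ∈ Icc 0 m)
    (hG : ∀ y, HasDerivAt G (G' y) y) (hG' : HasDerivAt G' G'' x) :
    deriv (deriv fun y => primitive g (G y)) x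
      = derivWithin g (Icc 0 m) (G x) * G' x ^ 2 + g (G x) * G'' := by
  have hderiv : (deriv fun y => primitive g (G y)) = fun y => g (G y) * G' y :=
    funext fun y => (hasDerivAt_primitive_comp hg.continuousOn hmem (hG y)).deriv
  have hgG : HasDerivAt (fun y => g (G y)) (derivWithin g (Icc 0 m) (G x) * G' x) x :=
    (hg.differentiableOn one_ne_zero _ (hmem x)).hasDerivWithinAt.comp_hasDerivAt x (hG x)
      (.of_forall hmem)
  rw [hderiv, (hgG.fun_mul hG').deriv]
  ring

theorem HasClassicalRegularity.exists_hasC12On {a b : ℝ → ℝ} {F : ℝ → ℝ → ℝ}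
    (h : HasClassicalRegularity a b F) (ha : ContDiffOn ℝ 1 a (Icc 0 1))
    (hb : ContinuousOn b (Icc 0 1)) (hmem : ∀ t > 0, ∀ x, F t x ∈ Icc (0 : ℝ) 1) :
    ∃ Ft Fx Fxx, HasC12On F Ft Fx Fxx (Ioi 0 ×ˢ univ) ∧ ∀ t > 0, ∀ x, Ft t x =
      1 / 2 * (derivWithin a (Icc 0 1) (F t x) * Fx t x ^ 2 + a (F t x) * Fxx t x)
        - b (F t x) * Fx t x := by
  obtain ⟨Ft, Fx, Fxx, hderiv, hcont, hcont_t, hcont_x, hcont_xx, hpde⟩ := h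
  refine ⟨Ft, Fx, Fxx, ⟨fun t x h => (hderiv t h.1 x).1, fun t x h => (hderiv t h.1 x).2.1,
    fun t x h => (hderiv t h.1 x).2.2, hcont, hcont_t, hcont_x, hcont_xx⟩, fun t ht x => ?_⟩
  rw [hpde t ht x, deriv_deriv_primitive_comp ha (hmem t ht) (fun y => (hderiv t ht y).2.1)
    (hderiv t ht x).2.2, (hasDerivAt_primitive_comp hb (hmem t ht) (hderiv t ht x).2.1).deriv]

variable {a b : ℝ → ℝ} {F Ft Fx Fxx : ℝ → ℝ → ℝ}

theorem space_deriv_pos_of_quasilinear (ha : ContDiffOn ℝ 1 a (Icc 0 1))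
    (hb : ContinuousOn b (Icc 0 1)) (hapos : ∀ u ∈ Icc (0 : ℝ) 1, 0 < a u)
    (hF : HasC12On F Ft Fx Fxx (Ioi 0 ×ˢ univ))
    (hpde : ∀ t > 0, ∀ x, Ft t x =
      1 / 2 * (derivWithin a (Icc 0 1) (F t x) * Fx t x ^ 2 + a (F t x) * Fxx t x)
        - b (F t x) * Fx t x)
    (hmem : ∀ t > 0, ∀ x, F t x ∈ Icc (0 : ℝ) 1) (hmono : ∀ t > 0, Monotone (F t))
    (hnonconst : ∀ t > 0, ∃ x y, F t x ≠ F t y) {t : ℝ} (ht : 0 < t) (x : ℝ) : 0 < Fx t x := by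
  have hpos {s : ℝ} (hs : s ∈ Icc (t / 2) t) : 0 < s := (half_pos ht).trans_le hs.1
  have hsub : Icc (t / 2) t ×ˢ univ ⊆ Ioi (0 : ℝ) ×ˢ (univ : Set ℝ) :=
    prod_mono (fun _ => hpos) subset_rfl
  have hF' := hF.mono hsub
  have hcomp {g : ℝ → ℝ} (hg : ContinuousOn g (Icc 0 1)) :
      ContinuousOn (fun z : ℝ × ℝ => g (F z.1 z.2)) (Icc (t / 2) t ×ˢ univ) :=
    hg.comp hF'.continuousOn fun z hz => hmem z.1 (hpos hz.1) z.2
  have ha' : ContinuousOn (derivWithin a (Icc 0 1)) (Icc 0 1) :=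
    ha.continuousOn_derivWithin (uniqueDiffOn_Icc zero_lt_one) le_rfl
  have hβ : ContinuousOn (fun z : ℝ × ℝ =>
      1 / 2 * (derivWithin a (Icc 0 1) (F z.1 z.2) * Fx z.1 z.2) - b (F z.1 z.2))
      (Icc (t / 2) t ×ˢ univ) :=
    (continuousOn_const.mul ((hcomp ha').mul hF'.continuousOn_space)).sub (hcomp hb)
  refine space_deriv_pos_of_monotone (α := fun s y => 1 / 2 * a (F s y))
    (β := fun s y => 1 / 2 * (derivWithin a (Icc 0 1) (F s y) * Fx s y) - b (F s y))
    (half_lt_self ht) hF' (continuousOn_const.mul (hcomp ha.continuousOn)) hβ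
    (fun s hs y => mul_pos one_half_pos (hapos _ (hmem s (hpos hs) y))) (fun s hs y => ?_)
    (fun s hs => hmono s (hpos hs)) (hnonconst _ (half_pos ht)) x
  rw [hpde s (hpos hs) y]
  ring

theorem strictMono_of_space_deriv_pos (hF : HasC12On F Ft Fx Fxx (Ioi 0 ×ˢ univ))
    (hFx : ∀ t > 0, ∀ x, 0 < Fx t x) {t : ℝ} (ht : 0 < t) : StrictMono (F t) :=
  strictMono_of_hasDerivAt_pos (fun x => hF.hasDerivAt_space t x ⟨ht, mem_univ x⟩) (hFx t ht)

theorem apply_pinv_of_space_deriv_pos (hF : HasC12On F Ft Fx Fxx (Ioi 0 ×ˢ univ))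
    (hFx : ∀ t > 0, ∀ x, 0 < Fx t x) {t u l m : ℝ} (ht : 0 < t) (hbot : Tendsto (F t) atBot (𝓝 l))
    (htop : Tendsto (F t) atTop (𝓝 m)) (hu : u ∈ Ioo l m) : F t (pinv (F t) u) = u := by
  have hcont : Continuous (F t) := continuous_iff_continuousAt.2 fun x =>
    (hF.hasDerivAt_space t x ⟨ht, mem_univ x⟩).continuousAt
  exact apply_pinv_of_strictMono (strictMono_of_space_deriv_pos hF hFx ht)
    (Ioo_subset_range_of_tendsto hcont hbot htop hu)

theorem hasC12On_pinv (hF : HasC12On F Ft Fx Fxx (Ioi 0 ×ˢ univ)) (hFx : ∀ t > 0, ∀ x, 0 < Fx t x)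
    {S : Set ℝ} (hS : IsOpen S) (hinv : ∀ t > 0, ∀ u ∈ S, F t (pinv (F t) u) = u) :
    HasC12On (fun t u => pinv (F t) u) (fun t u => -Ft t (pinv (F t) u) / Fx t (pinv (F t) u))
      (fun t u => (Fx t (pinv (F t) u))⁻¹)
      (fun t u => -Fxx t (pinv (F t) u) / Fx t (pinv (F t) u) ^ 3) (Ioi 0 ×ˢ S) := by
  have hcont x : ContinuousOn (F · x) (Ioi 0) := fun t ht =>
    (hF.hasDerivAt_time t x ⟨ht, mem_univ x⟩).continuousAt.continuousWithinAt
  have hpinv := continuousOn_uncurry_of_strictMono_rightInverse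
    (fun _ => strictMono_of_space_deriv_pos hF hFx) hcont hinv
  exact hF.rightInverse (isOpen_Ioi.prod isOpen_univ) (isOpen_Ioi.prod hS)
    (fun t x h => (hFx t h.1 x).ne') hpinv (fun t u h => ⟨h.1, mem_univ _⟩)
    fun t u h => hinv t h.1 u h.2

/-- `Iu` plays the role of `∂ᵤF⁻¹` near `u`, and `ft`, `fx`, `fxx` those of the derivatives of `F`
at `(t, F_t⁻¹(u))`. -/
theorem neg_div_eq_sub_deriv_div {a Iu : ℝ → ℝ} {a' β ft fx fxx u : ℝ} (ha : HasDerivAt a a' u)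
    (hIu : HasDerivAt Iu (-fxx / fx ^ 3) u) (hIu_eq : Iu u = fx⁻¹) (hfx : fx ≠ 0)
    (hpde : ft = 1 / 2 * (a' * fx ^ 2 + a u * fxx) - β * fx) :
    -ft / fx = β - 1 / 2 * deriv (fun v => a v / Iu v) u := by
  rw [(ha.fun_div hIu (hIu_eq ▸ inv_ne_zero hfx)).deriv, hIu_eq, hpde]
  field_simp
  ring

theorem exists_ne_of_tendsto {G : ℝ → ℝ} {l m : ℝ} (hlm : l ≠ m) (hbot : Tendsto G atBot (𝓝 l))
    (htop : Tendsto G atTop (𝓝 m)) : ∃ x y, G x ≠ G y := by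
  by_contra! hconst
  have hl : G 0 = l := tendsto_nhds_unique tendsto_const_nhds (hbot.congr fun x => hconst x 0)
  have hm : G 0 = m := tendsto_nhds_unique tendsto_const_nhds (htop.congr fun x => hconst x 0)
  exact hlm (hl.symm.trans hm)

theorem cdfOf_eq_cdf_s7 (ν : Measure ℝ) [IsProbabilityMeasure ν] :
    cdfOf ν = ProbabilityTheory.cdf ν :=
  funext fun x => (ProbabilityTheory.cdf_eq_real ν x).symm

end Equation

theorem pseudo_inverse_evolution_equation_general
    (a b : ℝ → ℝ) (hb : ContinuousOn b (Icc 0 1)) (hapos : ∀ u ∈ Icc (0 : ℝ) 1, 0 < a u)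
    (hR1 : ContDiffOn ℝ 1 a (Icc 0 1)) (P : ℝ → ProbabilityMeasure ℝ) (F : ℝ → ℝ → ℝ)
    (hP : ∀ t > 0, F t = cdfOf (P t)) (hcl : HasClassicalRegularity a b F) :
    ∃ It Iu Iuu : ℝ → ℝ → ℝ, HasC12On (fun t u => pinv (F t) u) It Iu Iuu (Ioi 0 ×ˢ Ioo 0 1) ∧
      ∀ t > 0, ∀ u ∈ Ioo (0 : ℝ) 1, It t u = b u - 1 / 2 * deriv (fun v => a v / Iu t v) u := by
  have hcdf t (ht : 0 < t) : F t = ProbabilityTheory.cdf (P t : Measure ℝ) :=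
    (hP t ht).trans (cdfOf_eq_cdf_s7 _)
  have hmem t (ht : 0 < t) x : F t x ∈ Icc (0 : ℝ) 1 := hcdf t ht ▸
    ⟨ProbabilityTheory.cdf_nonneg _ x, ProbabilityTheory.cdf_le_one _ x⟩
  have hmono t (ht : 0 < t) : Monotone (F t) := hcdf t ht ▸ ProbabilityTheory.monotone_cdf _
  have hbot t (ht : 0 < t) : Tendsto (F t) atBot (𝓝 0) :=
    hcdf t ht ▸ ProbabilityTheory.tendsto_cdf_atBot _
  have htop t (ht : 0 < t) : Tendsto (F t) atTop (𝓝 1) :=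
    hcdf t ht ▸ ProbabilityTheory.tendsto_cdf_atTop _
  obtain ⟨Ft, Fx, Fxx, hF, hpde⟩ := hcl.exists_hasC12On hR1 hb hmem
  have hFx t (ht : 0 < t) x : 0 < Fx t x :=
    space_deriv_pos_of_quasilinear hR1 hb hapos hF hpde hmem hmono
      (fun s hs => exists_ne_of_tendsto zero_ne_one (hbot s hs) (htop s hs)) ht x
  have hinv t (ht : 0 < t) u (hu : u ∈ Ioo (0 : ℝ) 1) : F t (pinv (F t) u) = u :=
    apply_pinv_of_space_deriv_pos hF hFx ht (hbot t ht) (htop t ht) hu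
  have hI := hasC12On_pinv hF hFx isOpen_Ioo hinv
  refine ⟨_, _, _, hI, fun t ht u hu => ?_⟩
  have ha : HasDerivAt a (derivWithin a (Icc 0 1) u) u :=
    (hR1.differentiableOn one_ne_zero u (Ioo_subset_Icc_self hu)).hasDerivWithinAt.hasDerivAt
      (Icc_mem_nhds hu.1 hu.2)
  have hpde_u := hpde t ht (pinv (F t) u)
  rw [hinv t ht u hu] at hpde_u
  exact neg_div_eq_sub_deriv_div ha (hI.hasDerivAt_space_space t u ⟨ht, hu⟩) rfl
    (hFx t ht _).ne' hpde_u

/-- Under (D3), (R1) and classical regularity with bounded space derivative, the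
pseudo-inverse `(t,u) ↦ F_t⁻¹(u)` is `C^{1,2}` on `(0,∞) × (0,1)` and satisfies
`∂ₜ F_t⁻¹(u) = b(u) - (1/2) ∂_u (a(u) / ∂_u F_t⁻¹(u))`. -/
theorem pseudo_inverse_evolution_equation
    (a b : ℝ → ℝ)
    (ha : ContinuousOn a (Set.Icc 0 1)) (hb : ContinuousOn b (Set.Icc 0 1))
    (ha0 : ∀ u ∈ Set.Icc (0:ℝ) 1, 0 ≤ a u)
    (hD3 : ∃ c > (0:ℝ), ∀ u ∈ Set.Icc (0:ℝ) 1, c ≤ a u)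
    (hR1 : ContDiffOn ℝ 1 a (Set.Icc 0 1))
    (μ : Measure ℝ) [IsProbabilityMeasure μ] (hμ : Integrable (fun x => |x|) μ)
    (F : ℝ → ℝ → ℝ)
    (hF : IsWeakSolution (primitive a) (primitive b) (cdfOf μ) F) (hFmem : MemF F)
    (hcl : HasClassicalRegularity a b F)
    (hbd : ∀ t₁ t₂ : ℝ, 0 < t₁ → t₁ < t₂ →
      ∃ M : ℝ, ∀ t ∈ Set.Icc t₁ t₂, ∀ x : ℝ, |deriv (fun y => F t y) x| ≤ M) :
    ∃ It Iu Iuu : ℝ → ℝ → ℝ,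
      (∀ t : ℝ, 0 < t → ∀ u ∈ Set.Ioo (0:ℝ) 1,
        HasDerivAt (fun s => pinv (F s) u) (It t u) t ∧
        HasDerivAt (fun v => pinv (F t) v) (Iu t u) u ∧
        HasDerivAt (fun v => Iu t v) (Iuu t u) u) ∧
      ContinuousOn (fun q : ℝ × ℝ => pinv (F q.1) q.2) (Set.Ioi 0 ×ˢ Set.Ioo 0 1) ∧
      ContinuousOn (fun q : ℝ × ℝ => It q.1 q.2) (Set.Ioi 0 ×ˢ Set.Ioo 0 1) ∧
      ContinuousOn (fun q : ℝ × ℝ => Iu q.1 q.2) (Set.Ioi 0 ×ˢ Set.Ioo 0 1) ∧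
      ContinuousOn (fun q : ℝ × ℝ => Iuu q.1 q.2) (Set.Ioi 0 ×ˢ Set.Ioo 0 1) ∧
      (∀ t : ℝ, 0 < t → ∀ u ∈ Set.Ioo (0:ℝ) 1,
        It t u = b u - (1/2) * deriv (fun v => a v / Iu t v) u) := by
  obtain ⟨P, -, -, -, hP⟩ := hFmem
  obtain ⟨c, hc, hca⟩ := hD3
  obtain ⟨It, Iu, Iuu, hI, hpde⟩ := pseudo_inverse_evolution_equation_general a b hb
    (fun u hu => hc.trans_le (hca u hu)) hR1 P F (fun t ht => funext (hP t ht.le)) hcl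
  exact ⟨It, Iu, Iuu, fun t ht u hu => ⟨hI.hasDerivAt_time t u ⟨ht, hu⟩,
      hI.hasDerivAt_space t u ⟨ht, hu⟩, hI.hasDerivAt_space_space t u ⟨ht, hu⟩⟩,
    hI.continuousOn, hI.continuousOn_time, hI.continuousOn_space, hI.continuousOn_space_space, hpde⟩
end
end
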